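/- arXiv:1505.06390 — 2 statements merged into one kernel-verified Lean document; each statement's English description precedes it below -/
import Mathlib

section
/- For any smooth 2π-periodic functions v, φ : ℝ → ℝ there exists a unique smooth solution P of the polarized Gowdy wave equation such that sup_θ ( |P(τ,θ) - v(θ)τ - φ(θ)| + |∂τP(τ,θ) - v(θ)| ) → 0 as τ → ∞. (The map from polarized Gowdy solutions to their asymptotic data (v, φ) is a bijection.) -/
open Real

/-!
In the time `t = exp (-τ)` the polarized Gowdy equation is the Euler–Poisson–Darboux equation
`∂tt P + t⁻¹ ∂t P = ∂θθ P`, whose solutions are explicit.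

Existence. The mean of `F (θ + exp (-τ) * cos s)` over `s ∈ [0, π]` solves the equation: by
`sin² + cos² = 1`, the defect is the integral of the `s`-derivative of a function vanishing at `0`
and `π`. Thus the mean of `φ` is a solution tending to `φ`. With `τ` times the mean of `v`, the
error is twice the `τ`-derivative of that mean, and it is cancelled by adding the mean of `v`
against a multiple of the weight `log (2 * sin s)`, which has integral zero.

Uniqueness. Every Fourier coefficient `y` of the difference of two solutions with the same data
satisfies `y'' = -k exp (-2τ) y` with `k ≥ 0`, and tends to zero with `y'`. Integrating the
equation from infinity gives `y' = O(exp (-2τ))`, so the energy `exp (2τ) |y'|² + k |y|²` tends to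
zero. It is nonnegative and nondecreasing, so `y' = 0`, and `y` is a constant tending to zero.
-/

section Definitions

open Filter

/-- `P` solves the polarized Gowdy wave equation `∂ττ P = exp (-2 * τ) ∂θθ P`. Meaningful for
twice differentiable `P`, as `deriv` is `0` at points of non-differentiability. -/
def IsPolarizedGowdySolution (P : ℝ → ℝ → ℝ) : Prop :=
  ∀ τ θ, deriv (fun s ↦ deriv (fun s' ↦ P s' θ) s) τ = exp (-2 * τ) * deriv (deriv (P τ)) θ

/-- `P τ θ = v θ * τ + φ θ + o(1)` and `∂τ P τ θ = v θ + o(1)` as `τ → ∞`, uniformly in `θ`: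
`P` is asymptotically velocity term dominated with asymptotic data `(v, φ)`. -/
def HasAsymptoticData (P : ℝ → ℝ → ℝ) (v φ : ℝ → ℝ) : Prop :=
  TendstoUniformly (fun τ θ ↦ P τ θ - v θ * τ - φ θ) 0 atTop ∧
    TendstoUniformly (fun τ θ ↦ deriv (fun s ↦ P s θ) τ - v θ) 0 atTop

theorem hasAsymptoticData_iff {P : ℝ → ℝ → ℝ} {v φ : ℝ → ℝ} :
    HasAsymptoticData P v φ ↔ ∀ ε : ℝ, 0 < ε → ∃ T : ℝ, ∀ τ : ℝ, T ≤ τ → ∀ θ : ℝ,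
      |P τ θ - v θ * τ - φ θ| + |deriv (fun s ↦ P s θ) τ - v θ| < ε := by
  simp only [HasAsymptoticData, Metric.tendstoUniformly_iff, Pi.zero_apply, dist_zero_left,
    norm_eq_abs]
  constructor
  · rintro ⟨value, derivative⟩ ε hε
    refine eventually_atTop.1 ?_
    filter_upwards [value _ (half_pos hε), derivative _ (half_pos hε)] with τ h₁ h₂ θ
    linarith [h₁ θ, h₂ θ]
  · refine fun h ↦ ⟨fun ε hε ↦ ?_, fun ε hε ↦ ?_⟩ <;>
      filter_upwards [eventually_atTop.2 (h ε hε)] with τ hτ θ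
    · exact (le_add_of_nonneg_right (abs_nonneg _)).trans_lt (hτ θ)
    · exact (le_add_of_nonneg_left (abs_nonneg _)).trans_lt (hτ θ)

end Definitions

theorem deriv_periodic {E : Type*} [NormedAddCommGroup E] [NormedSpace ℝ E] {f : ℝ → E} {T : ℝ}
    (hf : f.Periodic T) : (deriv f).Periodic T := fun x ↦ by
  rw [← deriv_comp_add_const, hf.funext]

section ParametricIntegral

open MeasureTheory Set Topology

variable {w : ℝ → ℝ} {a b : ℝ}

theorem exists_mem_nhds_forall_norm_le_of_isCompact {X Y F : Type*} [TopologicalSpace X]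
    [TopologicalSpace Y] [SeminormedAddCommGroup F] {g : X → Y → F} (hg : Continuous ↿g)
    {K : Set Y} (hK : IsCompact K) (x : X) :
    ∃ C, ∃ U ∈ 𝓝 x, ∀ y ∈ K, ∀ z ∈ U, ‖g z y‖ ≤ C := by
  obtain ⟨C, hC⟩ := hK.exists_bound_of_continuousOn (f := g x) (by fun_prop)
  have near : ∀ᶠ z in 𝓝 x, ∀ y ∈ K, ‖g z y‖ < C + 1 :=
    hK.eventually_forall_of_forall_eventually fun y hy ↦
      hg.norm.continuousAt.eventually_lt_const ((hC y hy).trans_lt (lt_add_one C))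
  exact ⟨C + 1, _, near, fun y hy z hz ↦ (hz y hy).le⟩

theorem continuous_intervalIntegral_smul {X E : Type*} [TopologicalSpace X]
    [FirstCountableTopology X] [NormedAddCommGroup E] [NormedSpace ℝ E]
    (hw : IntervalIntegrable w volume a b) {G : X → ℝ → E} (hG : Continuous ↿G) :
    Continuous (fun x ↦ ∫ s in a..b, w s • G x s) := by
  refine continuous_iff_continuousAt.2 fun x ↦ ?_
  obtain ⟨C, U, hU, hC⟩ := exists_mem_nhds_forall_norm_le_of_isCompact hG isCompact_uIcc x
  have integrable (x : X) : IntervalIntegrable (fun s ↦ w s • G x s) volume a b :=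
    hw.smul_continuousOn (by fun_prop)
  refine intervalIntegral.continuousAt_of_dominated_interval (bound := fun s ↦ |w s| * C)
    (.of_forall fun x ↦ (integrable x).def'.aestronglyMeasurable) ?_ (hw.abs.mul_const C)
    (.of_forall fun s _ ↦ by fun_prop)
  filter_upwards [hU] with z hz
  refine .of_forall fun s hs ↦ ?_
  rw [norm_smul, norm_eq_abs]
  gcongr
  exact hC s (uIoc_subset_uIcc hs) z hz

theorem hasFDerivAt_intervalIntegral_smul {H E : Type*} [NormedAddCommGroup H]
    [NormedSpace ℝ H] [NormedAddCommGroup E] [NormedSpace ℝ E]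
    (hw : IntervalIntegrable w volume a b) {G : H → ℝ → E} {G' : H → ℝ → H →L[ℝ] E}
    (hG : ∀ x, Continuous (G x)) (hG' : Continuous ↿G')
    (h : ∀ x s, HasFDerivAt (fun x ↦ G x s) (G' x s) x) (x : H) :
    HasFDerivAt (fun x ↦ ∫ s in a..b, w s • G x s) (∫ s in a..b, w s • G' x s) x := by
  obtain ⟨C, U, hU, hC⟩ := exists_mem_nhds_forall_norm_le_of_isCompact hG' isCompact_uIcc x
  have integrable (x : H) : IntervalIntegrable (fun s ↦ w s • G x s) volume a b :=
    hw.smul_continuousOn (hG x).continuousOn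
  have integrable' : IntervalIntegrable (fun s ↦ w s • G' x s) volume a b :=
    hw.smul_continuousOn (by fun_prop)
  refine intervalIntegral.hasFDerivAt_integral_of_dominated_of_fderiv_le
    (bound := fun s ↦ |w s| * C) hU
    (.of_forall fun x ↦ (integrable x).def'.aestronglyMeasurable) (integrable x)
    integrable'.def'.aestronglyMeasurable (.of_forall fun s hs z hz ↦ ?_)
    (hw.abs.mul_const C) (.of_forall fun s _ z _ ↦ (h z s).const_smul (w s))
  rw [norm_smul, norm_eq_abs]
  gcongr
  exact hC s (uIoc_subset_uIcc hs) z hz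

theorem hasDerivAt_intervalIntegral_smul {E : Type*} [NormedAddCommGroup E] [NormedSpace ℝ E]
    (hw : IntervalIntegrable w volume a b) {G G' : ℝ → ℝ → E} (hG : ∀ x, Continuous (G x))
    (hG' : Continuous ↿G') (h : ∀ x s, HasDerivAt (fun x ↦ G x s) (G' x s) x) (x : ℝ) :
    HasDerivAt (fun x ↦ ∫ s in a..b, w s • G x s) (∫ s in a..b, w s • G' x s) x := by
  have continuous_toSpanSingleton :
      Continuous ↿(fun x s ↦ ContinuousLinearMap.toSpanSingleton ℝ (G' x s)) :=
    (ContinuousLinearMap.toSpanSingletonLIE ℝ E).continuous.comp hG'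
  have integrable : IntervalIntegrable
      (fun s ↦ w s • ContinuousLinearMap.toSpanSingleton ℝ (G' x s)) volume a b :=
    hw.smul_continuousOn (continuous_toSpanSingleton.comp (Continuous.prodMk_right x)).continuousOn
  refine (hasFDerivAt_intervalIntegral_smul hw hG continuous_toSpanSingleton
    (fun x s ↦ (h x s).hasFDerivAt) x).hasDerivAt.congr_deriv ?_
  rw [ContinuousLinearMap.intervalIntegral_apply integrable]
  simp only [smul_apply, ContinuousLinearMap.toSpanSingleton_apply, one_smul]

universe u

theorem contDiff_intervalIntegral_smul {H E : Type u} [NormedAddCommGroup H]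
    [NormedSpace ℝ H] [NormedAddCommGroup E] [NormedSpace ℝ E]
    (hw : IntervalIntegrable w volume a b) {n : ℕ∞} {G : H → ℝ → E} (hG : ContDiff ℝ n ↿G) :
    ContDiff ℝ n (fun x ↦ ∫ s in a..b, w s • G x s) := by
  -- The derivative takes values in `H →L[ℝ] E`, so the induction has to run over all targets.
  suffices nat_case : ∀ (m : ℕ) {E : Type u} [NormedAddCommGroup E] [NormedSpace ℝ E]
      {G : H → ℝ → E}, ContDiff ℝ m ↿G → ContDiff ℝ m (fun x ↦ ∫ s in a..b, w s • G x s) from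
    contDiff_iff_forall_nat_le.2 fun m hm ↦ nat_case m (hG.of_le (mod_cast hm))
  intro m
  induction m with
  | zero =>
    intro E _ _ G hG
    exact contDiff_zero.2 (continuous_intervalIntegral_smul hw hG.continuous)
  | succ m ih =>
    intro E _ _ G hG
    have differentiable_slice (x : H) (s : ℝ) : DifferentiableAt ℝ (fun x ↦ G x s) x :=
      (hG.comp (contDiff_prodMk_left s)).contDiffAt.differentiableAt (by simp)
    have hG' : ContDiff ℝ m ↿(fun x s ↦ fderiv ℝ (fun x ↦ G x s) x) :=
      ContDiff.fderiv_succ (f := fun (p : H × ℝ) x ↦ G x p.2)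
        (hG.comp (contDiff_snd.prodMk (contDiff_snd.comp contDiff_fst))) contDiff_fst
    exact contDiff_succ_iff_hasFDerivAt.2 ⟨_, ih hG', hasFDerivAt_intervalIntegral_smul hw
      (fun x ↦ hG.continuous.comp (Continuous.prodMk_right x)) hG'.continuous
      fun x s ↦ (differentiable_slice x s).hasFDerivAt⟩

end ParametricIntegral

section ConeMean

open MeasureTheory Set Filter Topology

variable {w g F : ℝ → ℝ}

/-- The mean of `F` with weight `w` over `[θ - exp (-τ), θ + exp (-τ)]`, the part of the
singularity `τ = ∞` that characteristics of `∂ττ P = exp (-2 * τ) ∂θθ P` starting at `(τ, θ)`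
can reach, in the parametrization `s ↦ θ + exp (-τ) * cos s`. -/
noncomputable def coneMean (w F : ℝ → ℝ) (τ θ : ℝ) : ℝ :=
  ∫ s in 0..π, w s * F (θ + exp (-τ) * cos s)

theorem contDiff_coneMean (hw : IntervalIntegrable w volume 0 π) {n : ℕ∞}
    (hF : ContDiff ℝ n F) : ContDiff ℝ n (fun p : ℝ × ℝ ↦ coneMean w F p.1 p.2) :=
  contDiff_intervalIntegral_smul hw (G := fun (p : ℝ × ℝ) s ↦ F (p.2 + exp (-p.1) * cos s))
    (hF.comp (by fun_prop))

theorem coneMean_periodic {T : ℝ} (hF : F.Periodic T) (τ : ℝ) : (coneMean w F τ).Periodic T := by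
  intro θ
  simp only [coneMean, add_right_comm θ T, hF _]

theorem hasDerivAt_coneMean_right (hw : IntervalIntegrable w volume 0 π) (hF : ContDiff ℝ 1 F)
    (τ θ : ℝ) : HasDerivAt (coneMean w F τ) (coneMean w (deriv F) τ θ) θ := by
  have : Continuous (deriv F) := hF.continuous_deriv le_rfl
  have hFc : Continuous F := hF.continuous
  exact hasDerivAt_intervalIntegral_smul hw (G := fun θ s ↦ F (θ + exp (-τ) * cos s))
    (G' := fun θ s ↦ deriv F (θ + exp (-τ) * cos s)) (by fun_prop) (by fun_prop)
    (fun θ s ↦ (hF.differentiable one_ne_zero _).hasDerivAt.comp_add_const θ _) θ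

theorem hasDerivAt_coneMean_left (hw : IntervalIntegrable w volume 0 π) (hF : ContDiff ℝ 1 F)
    (τ θ : ℝ) : HasDerivAt (fun τ ↦ coneMean w F τ θ)
      (-(exp (-τ) * coneMean (fun s ↦ w s * cos s) (deriv F) τ θ)) τ := by
  have : Continuous (deriv F) := hF.continuous_deriv le_rfl
  have hFc : Continuous F := hF.continuous
  have chain (τ s : ℝ) : HasDerivAt (fun τ ↦ F (θ + exp (-τ) * cos s))
      (deriv F (θ + exp (-τ) * cos s) * (exp (-τ) * -1 * cos s)) τ :=
    (hF.differentiable one_ne_zero _).hasDerivAt.comp τ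
      (((hasDerivAt_neg τ).exp.mul_const (cos s)).const_add θ)
  refine (hasDerivAt_intervalIntegral_smul hw (by fun_prop) (by fun_prop) chain τ).congr_deriv ?_
  rw [coneMean, ← neg_mul, ← intervalIntegral.integral_const_mul]
  congr! 2
  rw [smul_eq_mul]
  ring

theorem coneMean_add_coneMean_mul_cos (hw : IntervalIntegrable w volume 0 π)
    (hg : IntervalIntegrable g volume 0 π)
    (hw_sin : ContinuousOn (fun s ↦ w s * sin s) (Icc 0 π))
    (hw' : ∀ s ∈ Ioo 0 π, HasDerivAt w (g s / sin s) s) (hF : ContDiff ℝ 1 F) (τ θ : ℝ) :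
    coneMean g F τ θ + coneMean (fun s ↦ w s * cos s) F τ θ
      = exp (-τ) * coneMean (fun s ↦ w s * sin s ^ 2) (deriv F) τ θ := by
  have : Continuous (deriv F) := hF.continuous_deriv le_rfl
  have hFc : Continuous F := hF.continuous
  set f : ℝ → ℝ := fun s ↦ w s * sin s * F (θ + exp (-τ) * cos s)
  set f' : ℝ → ℝ := fun s ↦ g s * F (θ + exp (-τ) * cos s) + w s * cos s * F (θ + exp (-τ) * cos s)
    - exp (-τ) * (w s * sin s ^ 2 * deriv F (θ + exp (-τ) * cos s)) with hf'
  have integrable₁ : IntervalIntegrable (fun s ↦ g s * F (θ + exp (-τ) * cos s)) volume 0 π :=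
    hg.mul_continuousOn (by fun_prop)
  have integrable₂ : IntervalIntegrable
      (fun s ↦ w s * cos s * F (θ + exp (-τ) * cos s)) volume 0 π :=
    (hw.mul_continuousOn (by fun_prop)).mul_continuousOn (by fun_prop)
  have integrable₃ : IntervalIntegrable
      (fun s ↦ exp (-τ) * (w s * sin s ^ 2 * deriv F (θ + exp (-τ) * cos s))) volume 0 π :=
    ((hw.mul_continuousOn (by fun_prop)).mul_continuousOn (by fun_prop)).const_mul _
  have derivative : ∀ s ∈ Ioo 0 π, HasDerivAt f (f' s) s := by
    intro s hs
    have sin_ne_zero : sin s ≠ 0 := (sin_pos_of_mem_Ioo hs).ne'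
    refine (((hw' s hs).mul (hasDerivAt_sin s)).mul
      ((hF.differentiable one_ne_zero _).hasDerivAt.comp s
        (((hasDerivAt_cos s).const_mul (exp (-τ))).const_add θ))).congr_deriv ?_
    simp only [hf', Function.comp_apply, Pi.mul_apply]
    field_simp
    ring
  have total : ∫ s in 0..π, f' s = 0 := by
    rw [intervalIntegral.integral_eq_sub_of_hasDerivAt_of_le pi_pos.le
      (hw_sin.mul (by fun_prop)) derivative ((integrable₁.add integrable₂).sub integrable₃)]
    simp
  rw [hf', intervalIntegral.integral_sub (integrable₁.add integrable₂) integrable₃,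
    intervalIntegral.integral_add integrable₁ integrable₂,
    intervalIntegral.integral_const_mul] at total
  exact sub_eq_zero.1 total

theorem hasDerivAt_deriv_coneMean_left (hw : IntervalIntegrable w volume 0 π)
    (hg : IntervalIntegrable g volume 0 π)
    (hw_sin : ContinuousOn (fun s ↦ w s * sin s) (Icc 0 π))
    (hw' : ∀ s ∈ Ioo 0 π, HasDerivAt w (g s / sin s) s) (hF : ContDiff ℝ 2 F) (τ θ : ℝ) :
    HasDerivAt (fun τ ↦ -(exp (-τ) * coneMean (fun s ↦ w s * cos s) (deriv F) τ θ))
      (exp (-2 * τ) * coneMean w (deriv (deriv F)) τ θ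
        - exp (-τ) * coneMean g (deriv F) τ θ) τ := by
  have hF' : ContDiff ℝ 1 (deriv F) := hF.deriv'
  have : Continuous (deriv (deriv F)) := hF'.continuous_deriv le_rfl
  have sin_sq_add_cos_sq : coneMean (fun s ↦ w s * sin s ^ 2) (deriv (deriv F)) τ θ
      + coneMean (fun s ↦ w s * cos s * cos s) (deriv (deriv F)) τ θ
      = coneMean w (deriv (deriv F)) τ θ := by
    rw [coneMean, coneMean, ← intervalIntegral.integral_add]
    · rw [coneMean]
      congr! 2 with s
      linear_combination w s * deriv (deriv F) (θ + exp (-τ) * cos s) * Real.sin_sq_add_cos_sq s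
    · exact (hw.mul_continuousOn (by fun_prop)).mul_continuousOn (by fun_prop)
    · exact ((hw.mul_continuousOn (by fun_prop)).mul_continuousOn (by fun_prop)).mul_continuousOn
        (by fun_prop)
  refine ((hasDerivAt_neg τ).exp.mul (hasDerivAt_coneMean_left
    (hw.mul_continuousOn (by fun_prop)) hF' τ θ)).neg.congr_deriv ?_
  have exp_sq : exp (-2 * τ) = exp (-τ) * exp (-τ) := by rw [← exp_add]; ring_nf
  linear_combination exp (-τ) * coneMean_add_coneMean_mul_cos hw hg hw_sin hw' hF' τ θ
    - coneMean w (deriv (deriv F)) τ θ * exp_sq + exp (-τ) ^ 2 * sin_sq_add_cos_sq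

theorem abs_coneMean_le (hw : IntervalIntegrable w volume 0 π) {C : ℝ} (hF : ∀ x, |F x| ≤ C)
    (τ θ : ℝ) : |coneMean w F τ θ| ≤ C * ∫ s in 0..π, |w s| := by
  rw [← norm_eq_abs, coneMean, ← intervalIntegral.integral_const_mul]
  refine intervalIntegral.norm_integral_le_of_norm_le pi_pos.le
    (.of_forall fun s _ ↦ ?_) (hw.abs.const_mul C)
  rw [norm_mul, mul_comm, norm_eq_abs, norm_eq_abs]
  gcongr
  exact hF _

theorem abs_coneMean_sub_le (hw : IntervalIntegrable w volume 0 π) {K : NNReal}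
    (hF : LipschitzWith K F) (τ θ : ℝ) :
    |coneMean w F τ θ - F θ * ∫ s in 0..π, w s| ≤ exp (-τ) * (K * ∫ s in 0..π, |w s|) := by
  have hFc : Continuous F := hF.continuous
  have pointwise (s : ℝ) : |F (θ + exp (-τ) * cos s) - F θ| ≤ K * exp (-τ) := by
    refine (hF.dist_le_mul _ _).trans ?_
    rw [dist_self_add_left, norm_mul, norm_of_nonneg (exp_nonneg _)]
    gcongr
    exact mul_le_of_le_one_right (exp_nonneg _) (abs_cos_le_one s)
  rw [← norm_eq_abs, coneMean, ← intervalIntegral.integral_const_mul,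
    ← intervalIntegral.integral_sub (hw.mul_continuousOn (by fun_prop)) (hw.const_mul _),
    ← mul_assoc, ← intervalIntegral.integral_const_mul]
  refine intervalIntegral.norm_integral_le_of_norm_le pi_pos.le
    (.of_forall fun s _ ↦ ?_) (hw.abs.const_mul _)
  rw [mul_comm (F θ), ← mul_sub, norm_mul, mul_comm, mul_comm (exp (-τ)) (K : ℝ)]
  exact mul_le_mul_of_nonneg_right (pointwise s) (norm_nonneg _)

theorem tendstoUniformly_mul_coneMean {c : ℝ → ℝ} (hc : Tendsto c atTop (𝓝 0))
    (hw : IntervalIntegrable w volume 0 π) {C : ℝ} (hF : ∀ x, |F x| ≤ C) :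
    TendstoUniformly (fun τ θ ↦ c τ * coneMean w F τ θ) 0 atTop := by
  have bound : Tendsto (fun τ ↦ |c τ| * (C * ∫ s in 0..π, |w s|)) atTop (𝓝 0) := by
    simpa using hc.abs.mul_const (C * ∫ s in 0..π, |w s|)
  refine Metric.tendstoUniformly_iff.2 fun ε hε ↦ ?_
  filter_upwards [bound.eventually_lt_const hε] with τ hτ θ
  rw [Pi.zero_apply, dist_zero_left, norm_mul]
  exact (mul_le_mul_of_nonneg_left (abs_coneMean_le hw hF τ θ) (abs_nonneg _)).trans_lt hτ

theorem tendstoUniformly_mul_coneMean_sub {c : ℝ → ℝ}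
    (hc : Tendsto (fun τ ↦ c τ * exp (-τ)) atTop (𝓝 0))
    (hw : IntervalIntegrable w volume 0 π) {K : NNReal} (hF : LipschitzWith K F) :
    TendstoUniformly (fun τ θ ↦ c τ * (coneMean w F τ θ - F θ * ∫ s in 0..π, w s)) 0 atTop := by
  have bound : Tendsto (fun τ ↦ |c τ * exp (-τ)| * (K * ∫ s in 0..π, |w s|)) atTop (𝓝 0) := by
    simpa using hc.abs.mul_const (K * ∫ s in 0..π, |w s|)
  refine Metric.tendstoUniformly_iff.2 fun ε hε ↦ ?_
  filter_upwards [bound.eventually_lt_const hε] with τ hτ θ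
  rw [Pi.zero_apply, dist_zero_left, norm_mul]
  refine (mul_le_mul_of_nonneg_left (abs_coneMean_sub_le hw hF τ θ) (abs_nonneg _)).trans_lt ?_
  rwa [abs_mul, abs_exp, mul_assoc] at hτ

end ConeMean

section GowdySolution

open MeasureTheory Set Filter Topology

variable {v φ : ℝ → ℝ}

/-- The weight in `gowdySolution` that, having mean zero, is invisible as `τ → ∞` and compensates
for `τ * coneMean (fun _ ↦ π⁻¹) v` not being a solution of the wave equation. -/
noncomputable def logSinWeight (s : ℝ) : ℝ := -(2 / π) * (log (sin s) + log 2)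

theorem intervalIntegrable_logSinWeight : IntervalIntegrable logSinWeight volume 0 π :=
  (intervalIntegrable_log_sin.add intervalIntegrable_const).const_mul _

theorem integral_logSinWeight : ∫ s in 0..π, logSinWeight s = 0 := by
  simp only [logSinWeight]
  rw [intervalIntegral.integral_const_mul, intervalIntegral.integral_add (f := fun s ↦ log (sin s))
    intervalIntegrable_log_sin intervalIntegrable_const, integral_log_sin_zero_pi,
    intervalIntegral.integral_const, smul_eq_mul]
  ring

theorem hasDerivAt_logSinWeight {s : ℝ} (hs : sin s ≠ 0) :
    HasDerivAt logSinWeight (-(2 / π) * cos s / sin s) s :=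
  ((((hasDerivAt_sin s).log hs).add_const (log 2)).const_mul (-(2 / π))).congr_deriv
    (mul_div_assoc _ _ _).symm

theorem continuous_logSinWeight_mul_sin : Continuous (fun s ↦ logSinWeight s * sin s) := by
  have h : Continuous (fun s ↦ -(2 / π) * (sin s * log (sin s) + log 2 * sin s)) := by
    have := continuous_mul_log
    fun_prop
  convert h using 2 with s
  rw [logSinWeight]
  ring

/-- The solution with asymptotic data `(v, φ)`. In the time `t = exp (-τ)` it is the general
solution of the Euler–Poisson–Darboux equation `∂tt P + t⁻¹ ∂t P = ∂θθ P`. -/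
noncomputable def gowdySolution (v φ : ℝ → ℝ) (τ θ : ℝ) : ℝ :=
  coneMean (fun _ ↦ π⁻¹) φ τ θ + τ * coneMean (fun _ ↦ π⁻¹) v τ θ + coneMean logSinWeight v τ θ

theorem contDiff_gowdySolution {n : ℕ∞} (hv : ContDiff ℝ n v) (hφ : ContDiff ℝ n φ) :
    ContDiff ℝ n (fun p : ℝ × ℝ ↦ gowdySolution v φ p.1 p.2) :=
  ((contDiff_coneMean intervalIntegrable_const hφ).add
    (contDiff_fst.mul (contDiff_coneMean intervalIntegrable_const hv))).add
    (contDiff_coneMean intervalIntegrable_logSinWeight hv)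

theorem gowdySolution_periodic {T : ℝ} (hv : v.Periodic T) (hφ : φ.Periodic T) (τ : ℝ) :
    (gowdySolution v φ τ).Periodic T := by
  intro θ
  simp only [gowdySolution, coneMean_periodic hv τ θ, coneMean_periodic hφ τ θ]

theorem hasDerivAt_gowdySolution_right (hv : ContDiff ℝ 1 v) (hφ : ContDiff ℝ 1 φ) (τ θ : ℝ) :
    HasDerivAt (gowdySolution v φ τ) (gowdySolution (deriv v) (deriv φ) τ θ) θ :=
  ((hasDerivAt_coneMean_right intervalIntegrable_const hφ τ θ).add
    ((hasDerivAt_coneMean_right intervalIntegrable_const hv τ θ).const_mul τ)).add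
    (hasDerivAt_coneMean_right intervalIntegrable_logSinWeight hv τ θ)

theorem hasDerivAt_gowdySolution_left (hv : ContDiff ℝ 1 v) (hφ : ContDiff ℝ 1 φ) (τ θ : ℝ) :
    HasDerivAt (fun τ ↦ gowdySolution v φ τ θ)
      (-(exp (-τ) * coneMean (fun s ↦ π⁻¹ * cos s) (deriv φ) τ θ)
        + (coneMean (fun _ ↦ π⁻¹) v τ θ
          + τ * -(exp (-τ) * coneMean (fun s ↦ π⁻¹ * cos s) (deriv v) τ θ))
        + -(exp (-τ) * coneMean (fun s ↦ logSinWeight s * cos s) (deriv v) τ θ)) τ := by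
  have product := (hasDerivAt_id τ).mul
    (hasDerivAt_coneMean_left (w := fun _ ↦ π⁻¹) intervalIntegrable_const hv τ θ)
  rw [one_mul] at product
  exact ((hasDerivAt_coneMean_left intervalIntegrable_const hφ τ θ).add product).add
    (hasDerivAt_coneMean_left intervalIntegrable_logSinWeight hv τ θ)

theorem hasDerivAt_deriv_coneMean_const (c : ℝ) {F : ℝ → ℝ} (hF : ContDiff ℝ 2 F) (τ θ : ℝ) :
    HasDerivAt (fun τ ↦ -(exp (-τ) * coneMean (fun s ↦ c * cos s) (deriv F) τ θ))
      (exp (-2 * τ) * coneMean (fun _ ↦ c) (deriv (deriv F)) τ θ) τ := by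
  refine (hasDerivAt_deriv_coneMean_left (g := 0) intervalIntegrable_const intervalIntegrable_const
    (by fun_prop) (fun s _ ↦ ?_) hF τ θ).congr_deriv ?_
  · simpa using hasDerivAt_const s c
  · simp [coneMean]

theorem hasDerivAt_deriv_coneMean_logSinWeight {F : ℝ → ℝ} (hF : ContDiff ℝ 2 F) (τ θ : ℝ) :
    HasDerivAt (fun τ ↦ -(exp (-τ) * coneMean (fun s ↦ logSinWeight s * cos s) (deriv F) τ θ))
      (exp (-2 * τ) * coneMean logSinWeight (deriv (deriv F)) τ θ
        + 2 * (exp (-τ) * coneMean (fun s ↦ π⁻¹ * cos s) (deriv F) τ θ)) τ := by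
  have integrable : IntervalIntegrable (fun s ↦ -(2 / π) * cos s) volume 0 π :=
    (by fun_prop : Continuous fun s ↦ -(2 / π) * cos s).intervalIntegrable _ _
  refine (hasDerivAt_deriv_coneMean_left intervalIntegrable_logSinWeight integrable
    continuous_logSinWeight_mul_sin.continuousOn
    (fun s hs ↦ hasDerivAt_logSinWeight (sin_pos_of_mem_Ioo hs).ne') hF τ θ).congr_deriv ?_
  have weight_eq : coneMean (fun s ↦ -(2 / π) * cos s) (deriv F) τ θ
      = -2 * coneMean (fun s ↦ π⁻¹ * cos s) (deriv F) τ θ := by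
    rw [coneMean, coneMean, ← intervalIntegral.integral_const_mul]
    congr! 2
    ring
  rw [weight_eq]
  ring

theorem isPolarizedGowdySolution_gowdySolution (hv : ContDiff ℝ 2 v) (hφ : ContDiff ℝ 2 φ) :
    IsPolarizedGowdySolution (gowdySolution v φ) := by
  intro τ θ
  have hv₁ : ContDiff ℝ 1 v := hv.of_le one_le_two
  have hφ₁ : ContDiff ℝ 1 φ := hφ.of_le one_le_two
  have deriv_left : (fun s ↦ deriv (fun s' ↦ gowdySolution v φ s' θ) s) = _ :=
    funext fun τ ↦ (hasDerivAt_gowdySolution_left hv₁ hφ₁ τ θ).deriv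
  have deriv_right : deriv (gowdySolution v φ τ) = gowdySolution (deriv v) (deriv φ) τ :=
    funext fun θ ↦ (hasDerivAt_gowdySolution_right hv₁ hφ₁ τ θ).deriv
  have deriv_deriv_left := ((hasDerivAt_deriv_coneMean_const π⁻¹ hφ τ θ).add
    ((hasDerivAt_coneMean_left (w := fun _ ↦ π⁻¹) intervalIntegrable_const hv₁ τ θ).add
      ((hasDerivAt_id τ).mul (hasDerivAt_deriv_coneMean_const π⁻¹ hv τ θ)))).add
    (hasDerivAt_deriv_coneMean_logSinWeight hv τ θ)
  rw [deriv_left, deriv_right, (hasDerivAt_gowdySolution_right hv.deriv' hφ.deriv' τ θ).deriv]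
  refine deriv_deriv_left.deriv.trans ?_
  rw [gowdySolution]
  simp only [id]
  ring

theorem tendsto_mul_exp_neg_atTop : Tendsto (fun τ ↦ τ * exp (-τ)) atTop (𝓝 0) := by
  simpa using tendsto_pow_mul_exp_neg_atTop_nhds_zero 1

theorem tendstoUniformly_gowdySolution_sub {K L : NNReal} (hv : LipschitzWith K v)
    (hφ : LipschitzWith L φ) :
    TendstoUniformly (fun τ θ ↦ gowdySolution v φ τ θ - v θ * τ - φ θ) 0 atTop := by
  have exp_zero : Tendsto (fun τ ↦ 1 * exp (-τ)) atTop (𝓝 0) := by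
    simpa using tendsto_exp_neg_atTop_nhds_zero
  have h := ((tendstoUniformly_mul_coneMean_sub exp_zero (w := fun _ ↦ π⁻¹)
    intervalIntegrable_const hφ).add (tendstoUniformly_mul_coneMean_sub
    tendsto_mul_exp_neg_atTop (w := fun _ ↦ π⁻¹) intervalIntegrable_const hv)).add
    (tendstoUniformly_mul_coneMean_sub exp_zero intervalIntegrable_logSinWeight hv)
  rw [add_zero, add_zero] at h
  refine (tendstoUniformly_congr (.of_forall fun τ ↦ funext fun θ ↦ ?_)).1 h
  simp only [gowdySolution, Pi.add_apply, integral_logSinWeight, intervalIntegral.integral_const,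
    smul_eq_mul, sub_zero, mul_inv_cancel₀ pi_ne_zero]
  ring

theorem tendstoUniformly_deriv_gowdySolution_sub {K L : NNReal} (hv : ContDiff ℝ 1 v)
    (hφ : ContDiff ℝ 1 φ) (hvK : LipschitzWith K v) (hφL : LipschitzWith L φ) :
    TendstoUniformly (fun τ θ ↦ deriv (fun s ↦ gowdySolution v φ s θ) τ - v θ) 0 atTop := by
  have exp_zero : Tendsto (fun τ ↦ -exp (-τ)) atTop (𝓝 0) := by
    simpa using tendsto_exp_neg_atTop_nhds_zero.neg
  have exp_zero' : Tendsto (fun τ ↦ 1 * exp (-τ)) atTop (𝓝 0) := by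
    simpa using tendsto_exp_neg_atTop_nhds_zero
  have mul_exp_zero : Tendsto (fun τ ↦ -(τ * exp (-τ))) atTop (𝓝 0) := by
    simpa using tendsto_mul_exp_neg_atTop.neg
  have hv' (x : ℝ) : |deriv v x| ≤ K := norm_deriv_le_of_lipschitz hvK
  have hφ' (x : ℝ) : |deriv φ x| ≤ L := norm_deriv_le_of_lipschitz hφL
  have integrable_cos : IntervalIntegrable (fun s ↦ π⁻¹ * cos s) volume 0 π :=
    (by fun_prop : Continuous fun s ↦ π⁻¹ * cos s).intervalIntegrable _ _
  have integrable_log_cos : IntervalIntegrable (fun s ↦ logSinWeight s * cos s) volume 0 π :=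
    intervalIntegrable_logSinWeight.mul_continuousOn (by fun_prop)
  have h := (((tendstoUniformly_mul_coneMean exp_zero integrable_cos hφ').add
    (tendstoUniformly_mul_coneMean_sub exp_zero' (w := fun _ ↦ π⁻¹) intervalIntegrable_const
      hvK)).add (tendstoUniformly_mul_coneMean mul_exp_zero integrable_cos hv')).add
    (tendstoUniformly_mul_coneMean exp_zero integrable_log_cos hv')
  simp only [add_zero] at h
  refine (tendstoUniformly_congr (.of_forall fun τ ↦ funext fun θ ↦ ?_)).1 h
  rw [(hasDerivAt_gowdySolution_left hv hφ τ θ).deriv]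
  simp only [Pi.add_apply, intervalIntegral.integral_const, smul_eq_mul, sub_zero,
    mul_inv_cancel₀ pi_ne_zero]
  ring

theorem exists_lipschitzWith_of_periodic {F : ℝ → ℝ} {T : ℝ} (hT : T ≠ 0) (hF : ContDiff ℝ 1 F)
    (hper : F.Periodic T) : ∃ K, LipschitzWith K F := by
  obtain ⟨C, hC⟩ := ((deriv_periodic hper).isBounded_of_continuous hT
    (hF.continuous_deriv le_rfl)).exists_norm_le
  exact ⟨C.toNNReal, lipschitzWith_of_nnnorm_deriv_le (hF.differentiable one_ne_zero) fun x ↦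
    NNReal.coe_le_coe.1 ((hC _ (mem_range_self x)).trans (le_coe_toNNReal C))⟩

theorem hasAsymptoticData_gowdySolution {T : ℝ} (hT : T ≠ 0) (hv : ContDiff ℝ 1 v)
    (hφ : ContDiff ℝ 1 φ) (hvT : v.Periodic T) (hφT : φ.Periodic T) :
    HasAsymptoticData (gowdySolution v φ) v φ := by
  obtain ⟨K, hK⟩ := exists_lipschitzWith_of_periodic hT hv hvT
  obtain ⟨L, hL⟩ := exists_lipschitzWith_of_periodic hT hφ hφT
  exact ⟨tendstoUniformly_gowdySolution_sub hK hL,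
    tendstoUniformly_deriv_gowdySolution_sub hv hφ hK hL⟩

end GowdySolution

section DecayingModes

open Filter Topology

theorem norm_le_of_tendsto_zero_of_norm_deriv_le {E : Type*} [NormedAddCommGroup E]
    [NormedSpace ℝ E] {f f' : ℝ → E} {B B' : ℝ → ℝ} {a : ℝ} (hf : ∀ t, HasDerivAt f (f' t) t)
    (hB : ∀ t, HasDerivAt B (B' t) t) (bound : ∀ t, a ≤ t → ‖f' t‖ ≤ -B' t)
    (hf₀ : Tendsto f atTop (𝓝 0)) (hB₀ : Tendsto B atTop (𝓝 0)) : ‖f a‖ ≤ B a := by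
  have increment : ∀ᶠ b in atTop, ‖f b - f a‖ ≤ B a - B b := by
    filter_upwards [eventually_ge_atTop a] with b hab
    exact image_norm_le_of_norm_deriv_right_le_deriv_boundary'
      (f := fun t ↦ f t - f a) (B := fun t ↦ B a - B t)
      (fun t _ ↦ ((hf t).sub_const _).continuousAt.continuousWithinAt)
      (fun t _ ↦ ((hf t).sub_const _).hasDerivWithinAt) (by simp)
      (fun t _ ↦ ((hB t).const_sub _).continuousAt.continuousWithinAt)
      (fun t _ ↦ ((hB t).const_sub _).hasDerivWithinAt) (fun t ht ↦ bound t ht.1) ⟨hab, le_rfl⟩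
  simpa using le_of_tendsto_of_tendsto (hf₀.sub_const (f a)).norm (hB₀.const_sub (B a)) increment

theorem hasDerivAt_exp_const_mul (c t : ℝ) :
    HasDerivAt (fun t ↦ exp (c * t)) (c * exp (c * t)) t := by
  simpa [mul_comm] using ((hasDerivAt_id t).const_mul c).exp

theorem tendsto_exp_neg_two_mul_atTop : Tendsto (fun t ↦ exp (-2 * t)) atTop (𝓝 0) :=
  tendsto_exp_atBot.comp (tendsto_id.const_mul_atTop_of_neg (by norm_num))

variable {E : Type*} {y y' : ℝ → E} {k : ℝ}

theorem eventually_norm_deriv_mode_le [NormedAddCommGroup E] [NormedSpace ℝ E] (hk : 0 ≤ k)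
    (hy' : ∀ t, HasDerivAt y' (-(k * exp (-2 * t)) • y t) t) (hy₀ : Tendsto y atTop (𝓝 0))
    (hy'₀ : Tendsto y' atTop (𝓝 0)) : ∀ᶠ t in atTop, ‖y' t‖ ≤ k / 2 * exp (-2 * t) := by
  have norm_le_one : ∀ᶠ t in atTop, ∀ s, t ≤ s → ‖y s‖ ≤ 1 :=
    eventually_forall_ge_atTop.2 (hy₀.norm.eventually_le_const (by simp))
  filter_upwards [norm_le_one] with t ht
  refine norm_le_of_tendsto_zero_of_norm_deriv_le (B := fun t ↦ k / 2 * exp (-2 * t)) hy'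
    (fun s ↦ (hasDerivAt_exp_const_mul (-2) s).const_mul (k / 2)) (fun s hs ↦ ?_) hy'₀
    (by simpa using tendsto_exp_neg_two_mul_atTop.const_mul (k / 2))
  calc ‖-(k * exp (-2 * s)) • y s‖ = k * exp (-2 * s) * ‖y s‖ := by
        rw [norm_smul, norm_neg, norm_of_nonneg (by positivity)]
    _ ≤ k * exp (-2 * s) := mul_le_of_le_one_right (by positivity) (ht s hs)
    _ = -(k / 2 * (-2 * exp (-2 * s))) := by ring

variable [NormedAddCommGroup E] [InnerProductSpace ℝ E]

theorem monotone_mode_energy (hy : ∀ t, HasDerivAt y (y' t) t)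
    (hy' : ∀ t, HasDerivAt y' (-(k * exp (-2 * t)) • y t) t) :
    Monotone fun t ↦ exp (2 * t) * ‖y' t‖ ^ 2 + k * ‖y t‖ ^ 2 := by
  refine monotone_of_hasDerivAt_nonneg (fun t ↦ ((hasDerivAt_exp_const_mul 2 t).mul
    (hy' t).norm_sq).add ((hy t).norm_sq.const_mul k)) fun t ↦ ?_
  have exp_mul_exp : exp (2 * t) * exp (-2 * t) = 1 := by rw [← exp_add]; simp
  have derivative : 2 * exp (2 * t) * ‖y' t‖ ^ 2
      + exp (2 * t) * (2 * inner ℝ (y' t) (-(k * exp (-2 * t)) • y t))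
      + k * (2 * inner ℝ (y t) (y' t)) = 2 * exp (2 * t) * ‖y' t‖ ^ 2 := by
    rw [inner_smul_right, real_inner_comm]
    linear_combination -2 * k * inner ℝ (y t) (y' t) * exp_mul_exp
  rw [Pi.zero_apply, derivative]
  positivity

theorem eq_zero_of_mode_tendsto_zero (hk : 0 ≤ k) (hy : ∀ t, HasDerivAt y (y' t) t)
    (hy' : ∀ t, HasDerivAt y' (-(k * exp (-2 * t)) • y t) t) (hy₀ : Tendsto y atTop (𝓝 0))
    (hy'₀ : Tendsto y' atTop (𝓝 0)) : y = 0 := by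
  have kinetic_tendsto : Tendsto (fun t ↦ exp (2 * t) * ‖y' t‖ ^ 2) atTop (𝓝 0) := by
    refine squeeze_zero' (g := fun t ↦ (k / 2) ^ 2 * exp (-2 * t))
      (.of_forall fun t ↦ by positivity) ?_
      (by simpa using tendsto_exp_neg_two_mul_atTop.const_mul ((k / 2) ^ 2))
    filter_upwards [eventually_norm_deriv_mode_le hk hy' hy₀ hy'₀] with t ht
    calc exp (2 * t) * ‖y' t‖ ^ 2 ≤ exp (2 * t) * (k / 2 * exp (-2 * t)) ^ 2 := by gcongr
      _ = (k / 2) ^ 2 * (exp (2 * t) * exp (-2 * t)) * exp (-2 * t) := by ring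
      _ = (k / 2) ^ 2 * exp (-2 * t) := by rw [← exp_add]; simp
  have energy_tendsto :
      Tendsto (fun t ↦ exp (2 * t) * ‖y' t‖ ^ 2 + k * ‖y t‖ ^ 2) atTop (𝓝 0) := by
    simpa using kinetic_tendsto.add ((hy₀.norm.pow 2).const_mul k)
  have deriv_eq_zero (t : ℝ) : y' t = 0 := by
    have energy_nonpos := (monotone_mode_energy hy hy').ge_of_tendsto energy_tendsto t
    have potential_nonneg : 0 ≤ k * ‖y t‖ ^ 2 := by positivity
    have kinetic_nonpos : exp (2 * t) * ‖y' t‖ ^ 2 ≤ 0 := by linarith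
    simpa using nonpos_of_mul_nonpos_right kinetic_nonpos (exp_pos _)
  funext t
  have constant : y = fun _ ↦ y t := funext fun s ↦
    is_const_of_deriv_eq_zero (fun x ↦ (hy x).differentiableAt)
      (fun x ↦ (hy x).deriv.trans (deriv_eq_zero x)) s t
  rw [constant] at hy₀
  exact tendsto_nhds_unique tendsto_const_nhds hy₀

end DecayingModes

section FourierCoefficients

open MeasureTheory Filter Topology Complex

variable {a b : ℝ} (hab : a < b) {f f' : ℝ → ℂ} (n : ℤ)

theorem fourierCoeffOn_deriv (hf : ∀ x, HasDerivAt f (f' x) x) (hf' : Continuous f')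
    (h_eq : f a = f b) :
    fourierCoeffOn hab f' n = 2 * π * I * n / (b - a) * fourierCoeffOn hab f n := by
  have integrable : IntervalIntegrable f' volume a b := hf'.intervalIntegrable a b
  have hab' : (b - a : ℂ) ≠ 0 := mod_cast (sub_pos.2 hab).ne'
  rcases eq_or_ne n 0 with rfl | hn
  · simp [fourierCoeffOn_eq_integral, h_eq,
      intervalIntegral.integral_eq_sub_of_hasDerivAt (fun x _ ↦ hf x) integrable]
  · rw [fourierCoeffOn_of_hasDerivAt hab hn (fun x _ ↦ hf x) integrable, h_eq]
    have : (n : ℂ) ≠ 0 := mod_cast hn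
    have := I_ne_zero
    field_simp
    simp

theorem fourierCoeffOn_deriv_deriv {q : ℝ → ℝ} (hq : ContDiff ℝ 2 q)
    (hper : q.Periodic (b - a)) :
    fourierCoeffOn hab (fun x ↦ ((deriv (deriv q) x : ℝ) : ℂ)) n
      = -(2 * π * n / (b - a)) ^ 2 • fourierCoeffOn hab (fun x ↦ (q x : ℂ)) n := by
  have hq' : ContDiff ℝ 1 (deriv q) := hq.deriv'
  have endpoints {f : ℝ → ℝ} (hf : f.Periodic (b - a)) : (f a : ℂ) = f b := by
    simpa using congrArg ofReal (hf a).symm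
  rw [fourierCoeffOn_deriv hab n
      (fun x ↦ (hq'.differentiable one_ne_zero x).hasDerivAt.ofReal_comp)
      (continuous_ofReal.comp (hq'.continuous_deriv le_rfl)) (endpoints (deriv_periodic hper)),
    fourierCoeffOn_deriv hab n
      (fun x ↦ (hq.differentiable two_ne_zero x).hasDerivAt.ofReal_comp)
      (continuous_ofReal.comp hq'.continuous) (endpoints hper), real_smul]
  push_cast
  linear_combination (2 * π * n / (b - a)) ^ 2 * fourierCoeffOn hab (fun x ↦ (q x : ℂ)) n * I_sq

theorem norm_fourierCoeffOn_le {C : ℝ} (hf : ∀ x, ‖f x‖ ≤ C) : ‖fourierCoeffOn hab f n‖ ≤ C := by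
  have hab' : 0 < b - a := sub_pos.2 hab
  rw [fourierCoeffOn_eq_integral, norm_smul, norm_of_nonneg (by positivity), one_div_mul_eq_div,
    div_le_iff₀ hab', ← abs_of_pos hab']
  refine intervalIntegral.norm_integral_le_of_norm_le_const fun x _ ↦ ?_
  rw [norm_smul, fourier_apply, Circle.norm_coe, one_mul]
  exact hf x

theorem tendsto_fourierCoeffOn {ι : Type*} {l : Filter ι} {u : ι → ℝ → ℂ}
    (hu : TendstoUniformly u 0 l) : Tendsto (fun i ↦ fourierCoeffOn hab (u i) n) l (𝓝 0) := by
  refine Metric.tendsto_nhds.2 fun ε hε ↦ ?_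
  filter_upwards [Metric.tendstoUniformly_iff.1 hu _ (half_pos hε)] with i hi
  rw [dist_zero_right]
  refine (norm_fourierCoeffOn_le hab n fun x ↦ ?_).trans_lt (half_lt_self hε)
  simpa using (hi x).le

theorem hasDerivAt_fourierCoeffOn {u u' : ℝ → ℝ → ℂ} (hu : ∀ t, Continuous (u t))
    (hu' : Continuous fun p : ℝ × ℝ ↦ u' p.1 p.2)
    (h : ∀ t x, HasDerivAt (fun t ↦ u t x) (u' t x) t) (t : ℝ) :
    HasDerivAt (fun t ↦ fourierCoeffOn hab (u t) n) (fourierCoeffOn hab (u' t) n) t := by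
  have continuous_fourier : Continuous fun x : ℝ ↦ fourier (-n) (x : AddCircle (b - a)) :=
    (map_continuous _).comp (AddCircle.continuous_mk' _)
  simp only [fourierCoeffOn_eq_integral]
  refine .const_smul _ ?_
  simpa using hasDerivAt_intervalIntegral_smul (w := fun _ ↦ 1) (a := a) (b := b)
    intervalIntegrable_const (G := fun t x ↦ fourier (-n) (x : AddCircle (b - a)) • u t x)
    (G' := fun t x ↦ fourier (-n) (x : AddCircle (b - a)) • u' t x)
    (fun t ↦ continuous_fourier.smul (hu t)) ((continuous_fourier.comp continuous_snd).smul hu')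
    (fun t x ↦ (h t x).const_mul _) t

theorem eq_zero_of_fourierCoeffOn_eq_zero (hf : Continuous f) (hper : f.Periodic (b - a))
    (h : ∀ n, fourierCoeffOn hab f n = 0) : f = 0 := by
  have : Fact (0 < b - a) := ⟨sub_pos.2 hab⟩
  let F : C(AddCircle (b - a), ℂ) := ⟨hper.lift, continuous_coinduced_dom.2 hf⟩
  have coeff_zero : fourierCoeff F = 0 := by
    funext n
    rw [fourierCoeff_eq_intervalIntegral F n a, add_sub_cancel, Pi.zero_apply, ← h n,
      fourierCoeffOn_eq_integral]
    rfl
  funext x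
  have series := has_pointwise_sum_fourier_series_of_summable (f := F)
    (coeff_zero ▸ summable_zero) x
  simp only [coeff_zero, Pi.zero_apply, zero_smul] at series
  exact series.unique hasSum_zero

end FourierCoefficients

section Uniqueness

open Filter Topology

variable {P R : ℝ → ℝ → ℝ}

theorem contDiff_slice_left {n : WithTop ℕ∞} (hP : ContDiff ℝ n fun p : ℝ × ℝ ↦ P p.1 p.2)
    (θ : ℝ) : ContDiff ℝ n fun τ ↦ P τ θ :=
  hP.comp (contDiff_prodMk_left θ)

theorem contDiff_slice_right {n : WithTop ℕ∞} (hP : ContDiff ℝ n fun p : ℝ × ℝ ↦ P p.1 p.2)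
    (τ : ℝ) : ContDiff ℝ n (P τ) :=
  hP.comp (contDiff_prodMk_right τ)

theorem contDiff_deriv_left {n : WithTop ℕ∞}
    (hP : ContDiff ℝ (n + 1) fun p : ℝ × ℝ ↦ P p.1 p.2) :
    ContDiff ℝ n fun p : ℝ × ℝ ↦ deriv (fun s ↦ P s p.2) p.1 :=
  (ContDiff.fderiv_succ (f := fun (p : ℝ × ℝ) s ↦ P s p.2)
    (hP.comp (contDiff_snd.prodMk (contDiff_snd.comp contDiff_fst))) contDiff_fst).clm_apply
    contDiff_const

theorem deriv_deriv_sub {f g : ℝ → ℝ} (hf : ContDiff ℝ 2 f) (hg : ContDiff ℝ 2 g) :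
    deriv (deriv (f - g)) = deriv (deriv f) - deriv (deriv g) := by
  have deriv_sub' {f g : ℝ → ℝ} (hf : ContDiff ℝ 1 f) (hg : ContDiff ℝ 1 g) :
      deriv (f - g) = deriv f - deriv g :=
    funext fun x ↦ deriv_sub (hf.differentiable one_ne_zero x) (hg.differentiable one_ne_zero x)
  rw [deriv_sub' (hf.of_le one_le_two) (hg.of_le one_le_two), deriv_sub' hf.deriv' hg.deriv']

theorem IsPolarizedGowdySolution.sub (hP : IsPolarizedGowdySolution P)
    (hR : IsPolarizedGowdySolution R)
    (hPc : ContDiff ℝ 2 fun p : ℝ × ℝ ↦ P p.1 p.2)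
    (hRc : ContDiff ℝ 2 fun p : ℝ × ℝ ↦ R p.1 p.2) : IsPolarizedGowdySolution (P - R) := by
  intro τ θ
  have left := congr_fun
    (deriv_deriv_sub (contDiff_slice_left hPc θ) (contDiff_slice_left hRc θ)) τ
  have right := congr_fun
    (deriv_deriv_sub (contDiff_slice_right hPc τ) (contDiff_slice_right hRc τ)) θ
  refine left.trans ?_
  rw [Pi.sub_apply P R, right, Pi.sub_apply, Pi.sub_apply, mul_sub, ← hP τ θ, ← hR τ θ]

theorem HasAsymptoticData.sub {v φ w ψ : ℝ → ℝ} (hP : HasAsymptoticData P v φ)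
    (hR : HasAsymptoticData R w ψ) (hPd : ∀ θ, Differentiable ℝ fun τ ↦ P τ θ)
    (hRd : ∀ θ, Differentiable ℝ fun τ ↦ R τ θ) :
    HasAsymptoticData (P - R) (v - w) (φ - ψ) := by
  constructor
  · refine (tendstoUniformly_congr (.of_forall fun τ ↦ funext fun θ ↦ ?_)).1
      (sub_zero (0 : ℝ → ℝ) ▸ hP.1.sub hR.1)
    simp only [Pi.sub_apply]
    ring
  · refine (tendstoUniformly_congr (.of_forall fun τ ↦ funext fun θ ↦ ?_)).1
      (sub_zero (0 : ℝ → ℝ) ▸ hP.2.sub hR.2)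
    simp only [Pi.sub_apply]
    rw [deriv_fun_sub (hPd θ τ) (hRd θ τ)]
    ring

theorem IsPolarizedGowdySolution.fourierCoeffOn_deriv_deriv {a b : ℝ} (hab : a < b)
    (hsol : IsPolarizedGowdySolution P) {τ : ℝ} (hP : ContDiff ℝ 2 (P τ))
    (hper : (P τ).Periodic (b - a)) (n : ℤ) :
    fourierCoeffOn hab (fun θ ↦ ((deriv (fun s ↦ deriv (fun s' ↦ P s' θ) s) τ : ℝ) : ℂ)) n =
      -((2 * π * n / (b - a)) ^ 2 * exp (-2 * τ)) •
        fourierCoeffOn hab (fun θ ↦ (P τ θ : ℂ)) n := by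
  simp only [hsol τ, Complex.ofReal_mul]
  rw [fourierCoeffOn.const_mul, _root_.fourierCoeffOn_deriv_deriv hab n hP hper]
  simp only [Complex.real_smul]
  push_cast
  ring

theorem fourierCoeffOn_eq_zero_of_hasAsymptoticData_zero {a b : ℝ} (hab : a < b)
    (hP : ContDiff ℝ 2 fun p : ℝ × ℝ ↦ P p.1 p.2) (hper : ∀ τ, (P τ).Periodic (b - a))
    (hsol : IsPolarizedGowdySolution P) (hdata : HasAsymptoticData P 0 0) (n : ℤ) (τ : ℝ) :
    fourierCoeffOn hab (fun θ ↦ (P τ θ : ℂ)) n = 0 := by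
  set P' : ℝ → ℝ → ℝ := fun τ θ ↦ deriv (fun s ↦ P s θ) τ
  set P'' : ℝ → ℝ → ℝ := fun τ θ ↦ deriv (fun s ↦ P' s θ) τ
  have hP' : ContDiff ℝ 1 fun p : ℝ × ℝ ↦ P' p.1 p.2 := contDiff_deriv_left hP
  have hP'' : Continuous fun p : ℝ × ℝ ↦ P'' p.1 p.2 :=
    (contDiff_deriv_left (n := 0) (by simpa using hP')).continuous
  have hasDerivAt_P (τ θ : ℝ) : HasDerivAt (fun τ ↦ P τ θ) (P' τ θ) τ :=
    ((contDiff_slice_left hP θ).differentiable two_ne_zero τ).hasDerivAt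
  have hasDerivAt_P' (τ θ : ℝ) : HasDerivAt (fun τ ↦ P' τ θ) (P'' τ θ) τ :=
    ((contDiff_slice_left hP' θ).differentiable one_ne_zero τ).hasDerivAt
  have continuous_ofReal_comp {u : ℝ → ℝ} (hu : Continuous u) :
      Continuous fun θ ↦ (u θ : ℂ) := Complex.continuous_ofReal.comp hu
  have mode_deriv := hasDerivAt_fourierCoeffOn hab n
    (fun τ ↦ continuous_ofReal_comp (contDiff_slice_right hP τ).continuous)
    (Complex.continuous_ofReal.comp hP'.continuous) fun τ θ ↦ (hasDerivAt_P τ θ).ofReal_comp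
  have mode_deriv' := hasDerivAt_fourierCoeffOn hab n
    (fun τ ↦ continuous_ofReal_comp (contDiff_slice_right hP' τ).continuous)
    (Complex.continuous_ofReal.comp hP'') fun τ θ ↦ (hasDerivAt_P' τ θ).ofReal_comp
  have mode_tendsto {u : ℝ → ℝ → ℝ} (hu : TendstoUniformly u 0 atTop) :
      Tendsto (fun τ ↦ fourierCoeffOn hab (fun θ ↦ (u τ θ : ℂ)) n) atTop (𝓝 0) := by
    refine tendsto_fourierCoeffOn hab n ?_
    simpa [Function.comp_def, Pi.zero_def] using
      Complex.isometry_ofReal.uniformContinuous.comp_tendstoUniformly hu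
  exact congr_fun (eq_zero_of_mode_tendsto_zero (sq_nonneg (2 * π * n / (b - a))) mode_deriv
    (fun τ ↦ hsol.fourierCoeffOn_deriv_deriv hab (contDiff_slice_right hP τ) (hper τ) n ▸
      mode_deriv' τ)
    (mode_tendsto (by simpa using hdata.1)) (mode_tendsto (by simpa using hdata.2))) τ

theorem eq_zero_of_hasAsymptoticData_zero {T : ℝ} (hT : 0 < T)
    (hP : ContDiff ℝ 2 fun p : ℝ × ℝ ↦ P p.1 p.2) (hper : ∀ τ, (P τ).Periodic T)
    (hsol : IsPolarizedGowdySolution P) (hdata : HasAsymptoticData P 0 0) : P = 0 := by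
  rw [← sub_zero T] at hper
  funext τ θ
  have complexified := eq_zero_of_fourierCoeffOn_eq_zero hT (f := fun θ ↦ (P τ θ : ℂ))
    (Complex.continuous_ofReal.comp (contDiff_slice_right hP τ).continuous)
    (fun θ ↦ congrArg _ (hper τ θ))
    fun n ↦ fourierCoeffOn_eq_zero_of_hasAsymptoticData_zero hT hP hper hsol hdata n τ
  exact Complex.ofReal_eq_zero.1 (congr_fun complexified θ)

theorem eq_of_hasAsymptoticData {T : ℝ} {v φ : ℝ → ℝ} (hT : 0 < T)
    (hP : ContDiff ℝ 2 fun p : ℝ × ℝ ↦ P p.1 p.2) (hR : ContDiff ℝ 2 fun p : ℝ × ℝ ↦ R p.1 p.2)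
    (hPper : ∀ τ, (P τ).Periodic T) (hRper : ∀ τ, (R τ).Periodic T)
    (hPsol : IsPolarizedGowdySolution P) (hRsol : IsPolarizedGowdySolution R)
    (hPdata : HasAsymptoticData P v φ) (hRdata : HasAsymptoticData R v φ) : P = R := by
  have data_sub := hPdata.sub hRdata
    (fun θ ↦ (contDiff_slice_left hP θ).differentiable two_ne_zero)
    (fun θ ↦ (contDiff_slice_left hR θ).differentiable two_ne_zero)
  rw [sub_self, sub_self] at data_sub
  exact sub_eq_zero.1 (eq_zero_of_hasAsymptoticData_zero hT (hP.sub hR)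
    (fun τ ↦ (hPper τ).sub (hRper τ)) (hPsol.sub hRsol hP hR) data_sub)

end Uniqueness

theorem polarized_gowdy_asymptotic_data_bijective_general {n : ℕ∞} (hn : 2 ≤ n) {T : ℝ}
    (hT : 0 < T) {v φ : ℝ → ℝ} (hv : ContDiff ℝ n v) (hφ : ContDiff ℝ n φ)
    (hvper : v.Periodic T) (hφper : φ.Periodic T) :
    ∃! P : ℝ → ℝ → ℝ, ContDiff ℝ n (fun p : ℝ × ℝ ↦ P p.1 p.2) ∧ (∀ τ, (P τ).Periodic T) ∧
      IsPolarizedGowdySolution P ∧ HasAsymptoticData P v φ := by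
  have two_le : (2 : WithTop ℕ∞) ≤ n := WithTop.coe_le_coe.2 hn
  have one_le : (1 : WithTop ℕ∞) ≤ n := one_le_two.trans two_le
  have solution := isPolarizedGowdySolution_gowdySolution (hv.of_le two_le) (hφ.of_le two_le)
  have data := hasAsymptoticData_gowdySolution hT.ne' (hv.of_le one_le) (hφ.of_le one_le)
    hvper hφper
  have smooth := contDiff_gowdySolution hv hφ
  have periodic := gowdySolution_periodic hvper hφper
  refine ⟨gowdySolution v φ, ⟨smooth, periodic, solution, data⟩, ?_⟩
  rintro P ⟨hP, hPper, hPsol, hPdata⟩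
  exact eq_of_hasAsymptoticData hT (hP.of_le two_le) (smooth.of_le two_le) hPper periodic
    hPsol solution hPdata data

/-- The map from polarized Gowdy solutions to asymptotic data is a bijection: for any
smooth 2π-periodic `(v, φ)` there is a unique smooth solution `P` of the polarized
Gowdy wave equation with `sup_θ (|P - vτ - φ| + |∂τP - v|) → 0` as `τ → ∞`. -/
theorem polarized_gowdy_asymptotic_data_bijective
    (v φ : ℝ → ℝ)
    (hv : ContDiff ℝ (⊤ : ℕ∞) v) (hφ : ContDiff ℝ (⊤ : ℕ∞) φ)
    (hvper : ∀ θ : ℝ, v (θ + 2 * π) = v θ)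
    (hφper : ∀ θ : ℝ, φ (θ + 2 * π) = φ θ) :
    ∃! P : ℝ → ℝ → ℝ,
      ContDiff ℝ (⊤ : ℕ∞) (fun p : ℝ × ℝ => P p.1 p.2) ∧
      (∀ τ θ : ℝ, P τ (θ + 2 * π) = P τ θ) ∧
      (∀ τ θ : ℝ, deriv (fun s => deriv (fun s' => P s' θ) s) τ
        = Real.exp (-2 * τ) * deriv (deriv (P τ)) θ) ∧
      (∀ ε : ℝ, 0 < ε → ∃ T : ℝ, ∀ τ : ℝ, T ≤ τ → ∀ θ : ℝ,
        |P τ θ - v θ * τ - φ θ| + |deriv (fun s => P s θ) τ - v θ| < ε) := by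
  simp only [← hasAsymptoticData_iff]
  exact polarized_gowdy_asymptotic_data_bijective_general le_top two_pi_pos hv hφ hvper hφper
end

section
/- Let (P, Q) be a smooth solution of the T³ Gowdy system. Then for every θ the asymptotic velocity V(θ) := lim_{τ→∞} [ (∂τP(τ,θ))² + e^{2P(τ,θ)} (∂τQ(τ,θ))² ]^{1/2} exists (the limit is a well-defined nonnegative real number). -/
open Real Filter

/-!
The components `z` and `w` of the differential of `(P, Q)` along the two null directions
`∂τ ± e^{-τ} ∂θ`, taken in an orthonormal frame of the hyperbolic plane `dP² + e^{2P} dQ²`, satisfy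
transport equations along the two families of characteristics. Up to rotations of the frame, which
do not affect norms, each of them relaxes towards the other at rate one half. Hence
`‖z‖²` and `‖w‖²` exchange energy along characteristics, with a loss governed by `‖z - w‖²`, and
their maximum over the time slices of the past light cone of `(∞, θ₀)` decreases to a limit `L`.

Take a point of a late slice where, say, `‖z‖²` is nearly `L`. As `‖z‖²` and `‖w‖²` hardly exceed
`L`, going back along the characteristic of `z` forces `‖z‖²` and `‖w‖²` to be near `L` and
`‖z - w‖²` near `0`. Going back further along the characteristic of `w` spreads this to the axis
`θ = θ₀`, reached exactly at time `log 2` before the starting point. On the axis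
`(∂τP)² + e^{2P} (∂τQ)² = ‖z + w‖² / 4 = (‖z‖² + ‖w‖²) / 2 - ‖z - w‖² / 4`, which therefore tends
to `L`.

Relaxation controls only time averages; pointwise control needs an upper bound for the derivative of
`‖z - w‖² - ‖w‖²` along characteristics. It follows from a bound for the covariant derivatives of
`z` and `w` along `e^{-τ} ∂θ`, given by the same maximum principle.
-/

noncomputable section

namespace Gowdy

open Set Topology
open scoped ComplexConjugate RealInnerProductSpace

section ScalarInequalities

lemma monotoneOn_Icc_of_hasDerivAt_nonneg {f f' : ℝ → ℝ} {a b : ℝ}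
    (hf : ∀ s ∈ Icc a b, HasDerivAt f (f' s) s) (hf' : ∀ s ∈ Icc a b, 0 ≤ f' s) :
    MonotoneOn f (Icc a b) :=
  monotoneOn_of_hasDerivWithinAt_nonneg (convex_Icc a b)
    (fun s hs => (hf s hs).continuousAt.continuousWithinAt)
    (fun s hs => (hf s (interior_subset hs)).hasDerivWithinAt)
    (fun s hs => hf' s (interior_subset hs))

lemma monotoneOn_exp_mul {f f' : ℝ → ℝ} {l a b : ℝ}
    (hf : ∀ s ∈ Icc a b, HasDerivAt f (f' s) s) (h : ∀ s ∈ Icc a b, 0 ≤ f' s + l * f s) :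
    MonotoneOn (fun s => exp (l * s) * f s) (Icc a b) := by
  refine monotoneOn_Icc_of_hasDerivAt_nonneg (f' := fun s => exp (l * s) * (f' s + l * f s))
    (fun s hs => ?_) (fun s hs => mul_nonneg (exp_pos _).le (h s hs))
  exact ((((hasDerivAt_id s).const_mul l).exp).mul (hf s hs)).congr_deriv (by rw [id]; ring)

/-- `G` relaxes towards `Y` at rate one half on the time interval `[T - 2, T]`, both functions are
nonnegative, and `Y` grows at speed at most `K`. -/
structure RelaxesOn (G Y : ℝ → ℝ) (K T : ℝ) : Prop where
  hasDerivAt_left : ∀ s ∈ Icc (T - 2) T, HasDerivAt G ((Y s - G s) / 2) s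
  differentiable_right : Differentiable ℝ Y
  deriv_right_le : ∀ s ∈ Icc (T - 2) T, deriv Y s ≤ K
  nonneg_left : ∀ s ∈ Icc (T - 2) T, 0 ≤ G s
  nonneg_right : ∀ s ∈ Icc (T - 2) T, 0 ≤ Y s

namespace RelaxesOn

variable {G Y : ℝ → ℝ} {K T : ℝ}

lemma left_le_three_mul (h : RelaxesOn G Y K T) {s : ℝ} (hs : s ∈ Icc (T - 2) T) :
    G s ≤ 3 * G T := by
  have hT : T ∈ Icc (T - 2) T := ⟨by linarith, le_rfl⟩
  have hmono : exp (1 / 2 * s) * G s ≤ exp (1 / 2 * T) * G T :=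
    monotoneOn_exp_mul h.hasDerivAt_left
      (fun u hu => by linarith [h.nonneg_right u hu]) hs hT hs.2
  have hexp : exp (1 / 2 * T) ≤ exp (1 / 2 * s) * 3 :=
    calc exp (1 / 2 * T) ≤ exp (1 / 2 * s + 1) := exp_le_exp.2 (by linarith [hs.1])
      _ = exp (1 / 2 * s) * exp 1 := exp_add _ _
      _ ≤ exp (1 / 2 * s) * 3 := by gcongr; exact exp_one_lt_three.le
  refine le_of_mul_le_mul_left ?_ (exp_pos (1 / 2 * s))
  calc exp (1 / 2 * s) * G s ≤ exp (1 / 2 * T) * G T := hmono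
    _ ≤ exp (1 / 2 * s) * 3 * G T := mul_le_mul_of_nonneg_right hexp (h.nonneg_left T hT)
    _ = exp (1 / 2 * s) * (3 * G T) := mul_assoc _ _ _

lemma right_sub_le (h : RelaxesOn G Y K T) {u s : ℝ} (hu : u ∈ Icc (T - 2) T)
    (hs : s ∈ Icc (T - 2) T) (hus : u ≤ s) : Y s - Y u ≤ |K| * (s - u) :=
  (convex_Icc (T - 2) T).image_sub_le_mul_sub_of_deriv_le
    h.differentiable_right.continuous.continuousOn h.differentiable_right.differentiableOn
    (fun x hx => (h.deriv_right_le x (interior_subset hx)).trans (le_abs_self K)) u hu s hs hus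

/-- If `Y` exceeded `δ` at some time then, since it grows at bounded speed, it was large during a
whole time interval before that, on which `G` would have been driven up to a definite size. -/
lemma right_le (h : RelaxesOn G Y K T) {δ : ℝ} (hδ : 0 < δ)
    (hT : G T ≤ δ * (δ / (2 * |K| + δ)) / 48) {s : ℝ} (hs : s ∈ Icc (T - 1) T) : Y s ≤ δ := by
  set r := δ / (2 * |K| + δ) with hr
  have hden : 0 < 2 * |K| + δ := by positivity
  have hr_pos : 0 < r := by positivity
  have hr_le_one : r ≤ 1 := (div_le_one hden).2 (by linarith [abs_nonneg K])
  have hKr : 2 * (|K| * r) + δ * r = δ := by rw [hr]; field_simp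
  have hsub : Icc (s - r) s ⊆ Icc (T - 2) T := fun u hu =>
    ⟨by linarith [hu.1, hs.1], hu.2.trans hs.2⟩
  have hs_mem : s ∈ Icc (s - r) s := ⟨by linarith, le_rfl⟩
  have hsr_mem : s - r ∈ Icc (s - r) s := ⟨le_rfl, by linarith⟩
  have hG_small : ∀ u ∈ Icc (s - r) s, G u ≤ δ * r / 16 := fun u hu => by
    linarith [h.left_le_three_mul (hsub hu)]
  by_contra! hY
  have hdrive : ∀ u ∈ Icc (s - r) s, 0 ≤ (Y u - G u) / 2 - δ / 8 := fun u hu => by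
    have hgrow := h.right_sub_le (hsub hu) (hsub hs_mem) hu.2
    have hKu : |K| * (s - u) ≤ |K| * r := by gcongr; linarith [hu.1]
    nlinarith [hG_small u hu]
  have hmono : G (s - r) - δ / 8 * (s - r) ≤ G s - δ / 8 * s :=
    monotoneOn_Icc_of_hasDerivAt_nonneg (f := fun u => G u - δ / 8 * u)
      (fun u hu => ((h.hasDerivAt_left u (hsub hu)).sub
        ((hasDerivAt_id u).const_mul (δ / 8))).congr_deriv (by simp))
      hdrive hsr_mem hs_mem (by linarith)
  nlinarith [hG_small s hs_mem, h.nonneg_left _ (hsub hsr_mem), mul_pos hδ hr_pos]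

end RelaxesOn

lemma exists_forall_relaxesOn_le (K : ℝ) {δ : ℝ} (hδ : 0 < δ) :
    ∃ η > 0, ∀ {G Y : ℝ → ℝ} {T : ℝ}, RelaxesOn G Y K T → G T ≤ η →
      ∀ s ∈ Icc (T - 1) T, G s ≤ δ ∧ Y s ≤ δ := by
  have hη : 0 < δ * (δ / (2 * |K| + δ)) / 48 := by positivity
  refine ⟨min (δ / 3) (δ * (δ / (2 * |K| + δ)) / 48), lt_min (by positivity) hη,
    fun h hT s hs => ⟨?_, h.right_le hδ (hT.trans (min_le_right _ _)) hs⟩⟩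
  linarith [h.left_le_three_mul (s := s) ⟨by linarith [hs.1], hs.2⟩,
    hT.trans (min_le_left _ _)]

end ScalarInequalities

section LieDerivative

variable {E F : Type*} [NormedAddCommGroup E] [NormedSpace ℝ E]
  [NormedAddCommGroup F] [NormedSpace ℝ F]

/-- The derivative of `f` along the vector field `V`. -/
def lieDeriv (V : E → E) (f : E → F) (x : E) : F := fderiv ℝ f x (V x)

variable {V W : E → E} {x : E}

lemma contDiff_lieDeriv {m n : WithTop ℕ∞} {f : E → F} (hf : ContDiff ℝ n f)
    (hV : ContDiff ℝ m V) (hmn : m + 1 ≤ n) : ContDiff ℝ m (lieDeriv V f) :=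
  (hf.fderiv_right hmn).clm_apply hV

lemma hasDerivAt_comp_of_hasDerivAt_field {f : E → F} (hf : Differentiable ℝ f) {γ : ℝ → E} {s : ℝ}
    (hγ : HasDerivAt γ (V (γ s)) s) : HasDerivAt (fun t => f (γ t)) (lieDeriv V f (γ s)) s :=
  (hf (γ s)).hasFDerivAt.comp_hasDerivAt s hγ

lemma lieDeriv_comm {f : E → F} (hf : ContDiff ℝ 2 f) (hV : DifferentiableAt ℝ V x)
    (hW : DifferentiableAt ℝ W x) :
    lieDeriv V (lieDeriv W f) x
      = lieDeriv W (lieDeriv V f) x + lieDeriv (VectorField.lieBracket ℝ V W) f x := by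
  have h := VectorField.fderiv_apply_lieBracket hf.contDiffAt
    minSmoothness_of_isRCLikeNormedField.le hW hV
  exact (add_eq_of_eq_sub' h).symm

lemma lieDeriv_const (c : F) : lieDeriv V (fun _ => c) x = 0 := by simp [lieDeriv]

lemma lieDeriv_add {f g : E → F} (hf : DifferentiableAt ℝ f x) (hg : DifferentiableAt ℝ g x) :
    lieDeriv V (fun y => f y + g y) x = lieDeriv V f x + lieDeriv V g x := by
  simp [lieDeriv, fderiv_fun_add hf hg]

lemma lieDeriv_sub {f g : E → F} (hf : DifferentiableAt ℝ f x) (hg : DifferentiableAt ℝ g x) :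
    lieDeriv V (fun y => f y - g y) x = lieDeriv V f x - lieDeriv V g x := by
  simp [lieDeriv, fderiv_fun_sub hf hg]

lemma lieDeriv_mul {A : Type*} [NormedCommRing A] [NormedAlgebra ℝ A] {f g : E → A}
    (hf : DifferentiableAt ℝ f x) (hg : DifferentiableAt ℝ g x) :
    lieDeriv V (fun y => f y * g y) x = f x * lieDeriv V g x + g x * lieDeriv V f x := by
  simp [lieDeriv, fderiv_fun_mul hf hg]

lemma lieDeriv_clm_comp {G : Type*} [NormedAddCommGroup G] [NormedSpace ℝ G] (L : F →L[ℝ] G)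
    {f : E → F} (hf : DifferentiableAt ℝ f x) :
    lieDeriv V (fun y => L (f y)) x = L (lieDeriv V f x) :=
  congr($((L.hasFDerivAt.comp x hf.hasFDerivAt).fderiv) (V x))

lemma lieDeriv_exp {f : E → ℝ} (hf : DifferentiableAt ℝ f x) :
    lieDeriv V (fun y => exp (f y)) x = exp (f x) * lieDeriv V f x := by
  simp [lieDeriv, fderiv_exp hf]

lemma lieDeriv_norm_sq {H : Type*} [NormedAddCommGroup H] [InnerProductSpace ℝ H] {f : E → H}
    (hf : DifferentiableAt ℝ f x) :
    lieDeriv V (fun y => ‖f y‖ ^ 2) x = 2 * ⟪f x, lieDeriv V f x⟫ := by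
  have h : lieDeriv V (fun y => ‖f y‖ ^ 2) x = (2 • (innerSL ℝ (f x)).comp (fderiv ℝ f x)) (V x) :=
    congr($(hf.hasFDerivAt.norm_sq.fderiv) (V x))
  simpa [lieDeriv] using h

end LieDerivative

section Fields

/-- The vector field `∂τ - σ e^{-τ} ∂θ`. It is `∂τ` for `σ = 0` and a null vector field of the Gowdy
system for `σ = ±1`. -/
def charField (σ : ℝ) (p : ℝ × ℝ) : ℝ × ℝ := (1, -σ * exp (-p.1))

/-- The vector field `e^{-τ} ∂θ`, of unit length for the metric `-dτ² + e^{2τ} dθ²`. -/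
def spaceField (p : ℝ × ℝ) : ℝ × ℝ := (0, exp (-p.1))

/-- The derivative along `∂τ - σ e^{-τ} ∂θ`. -/
abbrev charDeriv {F : Type*} [NormedAddCommGroup F] [NormedSpace ℝ F] (σ : ℝ) (f : ℝ × ℝ → F) :
    ℝ × ℝ → F := lieDeriv (charField σ) f

/-- The derivative along `e^{-τ} ∂θ`. -/
abbrev spaceDeriv {F : Type*} [NormedAddCommGroup F] [NormedSpace ℝ F] (f : ℝ × ℝ → F) :
    ℝ × ℝ → F := lieDeriv spaceField f

lemma contDiff_charField (σ : ℝ) {n : WithTop ℕ∞} : ContDiff ℝ n (charField σ) := by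
  unfold charField; fun_prop

lemma contDiff_spaceField {n : WithTop ℕ∞} : ContDiff ℝ n spaceField := by
  unfold spaceField; fun_prop

variable {F : Type*} [NormedAddCommGroup F] [NormedSpace ℝ F]

lemma charDeriv_eq_add_smul_spaceDeriv (σ σ' : ℝ) (f : ℝ × ℝ → F) (p : ℝ × ℝ) :
    charDeriv σ f p = charDeriv σ' f p + (σ' - σ) • spaceDeriv f p := by
  have hfield : charField σ p = charField σ' p + (σ' - σ) • spaceField p := by
    simp only [charField, spaceField, Prod.smul_mk, Prod.mk_add_mk, smul_eq_mul, Prod.mk.injEq]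
    constructor <;> ring
  simp [lieDeriv, hfield]

lemma lieBracket_charField_spaceField (σ : ℝ) (p : ℝ × ℝ) :
    VectorField.lieBracket ℝ (charField σ) spaceField p = -spaceField p := by
  have hexp : HasFDerivAt (fun q : ℝ × ℝ => exp (-q.1))
      (exp (-p.1) • -ContinuousLinearMap.fst ℝ ℝ ℝ) p := (hasFDerivAt_fst.neg).exp
  have hspace := (hasFDerivAt_const (0 : ℝ) p).prodMk hexp
  have hchar := (hasFDerivAt_const (1 : ℝ) p).prodMk (hexp.const_mul (-σ))
  rw [VectorField.lieBracket, show fderiv ℝ spaceField p = _ from hspace.fderiv,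
    show fderiv ℝ (charField σ) p = _ from hchar.fderiv]
  simp [charField, spaceField]

lemma charDeriv_spaceDeriv {f : ℝ × ℝ → F} (hf : ContDiff ℝ 2 f) (σ : ℝ) (p : ℝ × ℝ) :
    charDeriv σ (spaceDeriv f) p = spaceDeriv (charDeriv σ f) p - spaceDeriv f p := by
  have h := lieDeriv_comm (V := charField σ) (W := spaceField) (x := p) hf
    ((contDiff_charField σ (n := 1)).differentiable one_ne_zero p)
    ((contDiff_spaceField (n := 1)).differentiable one_ne_zero p)
  refine h.trans ?_
  simp [lieDeriv, sub_eq_add_neg, lieBracket_charField_spaceField]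

end Fields

section Cone

/-- The points of the past light cone of the boundary point `θ₀` of the singularity `τ = ∞`. -/
def pastCone (θ₀ : ℝ) : Set (ℝ × ℝ) := {p | |p.2 - θ₀| ≤ exp (-p.1)}

lemma axis_mem_pastCone (θ₀ s : ℝ) : (s, θ₀) ∈ pastCone θ₀ := by
  simp [pastCone, (exp_pos _).le]

lemma isClosed_pastCone (θ₀ : ℝ) : IsClosed (pastCone θ₀) :=
  isClosed_le (by fun_prop) (by fun_prop)

lemma isCompact_pastCone_inter (θ₀ s T : ℝ) :
    IsCompact (pastCone θ₀ ∩ Prod.fst ⁻¹' Icc s T) := by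
  have hrect : IsCompact (Icc s T ×ˢ Metric.closedBall θ₀ (exp (-s))) :=
    isCompact_Icc.prod (isCompact_closedBall _ _)
  refine hrect.of_isClosed_subset
    ((isClosed_pastCone θ₀).inter (isClosed_Icc.preimage continuous_fst)) ?_
  rintro p ⟨hp, hps⟩
  exact ⟨hps, hp.trans (exp_le_exp.2 (neg_le_neg hps.1))⟩

/-- The integral curve of `charField σ` through `p`, parametrised by the time coordinate. -/
def characteristic (σ : ℝ) (p : ℝ × ℝ) (s : ℝ) : ℝ × ℝ :=
  (s, p.2 + σ * (exp (-s) - exp (-p.1)))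

@[simp] lemma characteristic_fst (σ : ℝ) (p : ℝ × ℝ) (s : ℝ) :
    (characteristic σ p s).1 = s := rfl

@[simp] lemma characteristic_self (σ : ℝ) (p : ℝ × ℝ) : characteristic σ p p.1 = p := by
  simp [characteristic]

lemma hasDerivAt_characteristic (σ : ℝ) (p : ℝ × ℝ) (s : ℝ) :
    HasDerivAt (characteristic σ p) (charField σ (characteristic σ p s)) s := by
  have hexp : HasDerivAt (fun t : ℝ => exp (-t)) (exp (-s) * -1) s := (hasDerivAt_id s).neg.exp
  exact ((hasDerivAt_id s).prodMk (((hexp.sub_const _).const_mul σ).const_add p.2)).congr_deriv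
    (by simp [charField])

lemma hasDerivAt_comp_characteristic {F : Type*} [NormedAddCommGroup F] [NormedSpace ℝ F]
    {f : ℝ × ℝ → F} (hf : Differentiable ℝ f) (σ : ℝ) (p : ℝ × ℝ) (s : ℝ) :
    HasDerivAt (fun t => f (characteristic σ p t)) (charDeriv σ f (characteristic σ p s)) s :=
  hasDerivAt_comp_of_hasDerivAt_field hf (hasDerivAt_characteristic σ p s)

lemma characteristic_mem_pastCone {θ₀ σ s : ℝ} {p : ℝ × ℝ} (hσ : |σ| ≤ 1) (hp : p ∈ pastCone θ₀)
    (hs : s ≤ p.1) : characteristic σ p s ∈ pastCone θ₀ := by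
  have hexp : exp (-p.1) ≤ exp (-s) := exp_le_exp.2 (neg_le_neg hs)
  calc |p.2 + σ * (exp (-s) - exp (-p.1)) - θ₀|
      = |(p.2 - θ₀) + σ * (exp (-s) - exp (-p.1))| := by congr 1; ring
    _ ≤ |p.2 - θ₀| + |σ| * |exp (-s) - exp (-p.1)| := (abs_add_le _ _).trans_eq (by rw [abs_mul])
    _ ≤ exp (-p.1) + 1 * (exp (-s) - exp (-p.1)) := by
        rw [abs_of_nonneg (sub_nonneg.2 hexp)]
        exact add_le_add hp (mul_le_mul_of_nonneg_right hσ (sub_nonneg.2 hexp))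
    _ = exp (-s) := by ring

lemma abs_le_one_of_sq_eq_one {σ : ℝ} (hσ : σ ^ 2 = 1) : |σ| ≤ 1 :=
  (sq_le_one_iff_abs_le_one σ).1 hσ.le

lemma exists_characteristic_zigzag {θ₀ σ : ℝ} {p : ℝ × ℝ} (hσ : σ ^ 2 = 1)
    (hp : p ∈ pastCone θ₀) :
    ∃ s ∈ Icc (p.1 - log 2) p.1,
      characteristic (-σ) (characteristic σ p s) (p.1 - log 2) = (p.1 - log 2, θ₀) := by
  obtain ⟨τ, θ⟩ := p
  have hτ : 0 < exp (-τ) := exp_pos _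
  have hdist : |σ * (θ₀ - θ)| ≤ exp (-τ) := by
    rw [abs_mul, abs_sub_comm]
    exact (mul_le_of_le_one_left (abs_nonneg _) (abs_le_one_of_sq_eq_one hσ)).trans hp
  obtain ⟨hlow, hupp⟩ := abs_le.1 hdist
  -- `m` is the value of `exp (-τ)` where the two characteristics meet: it solves
  -- `θ + σ * (m - exp (-τ)) - σ * (2 * exp (-τ) - m) = θ₀`.
  set m := (3 * exp (-τ) + σ * (θ₀ - θ)) / 2 with hm
  have hm_pos : 0 < m := by linarith
  have hlog : exp (-(τ - log 2)) = 2 * exp (-τ) := by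
    rw [neg_sub, sub_eq_add_neg, exp_add, exp_log two_pos]
  refine ⟨-log m, ⟨?_, ?_⟩, ?_⟩
  · rw [le_neg, log_le_iff_le_exp hm_pos, hlog]
    linarith
  · rw [neg_le, le_log_iff_exp_le hm_pos]
    linarith
  · refine Prod.ext rfl ?_
    simp only [characteristic, neg_neg, exp_log hm_pos, hlog]
    rw [hm]
    linear_combination (θ₀ - θ) * hσ

variable {θ₀ s₀ l B σ : ℝ} {f g : ℝ × ℝ → ℝ}

lemma exists_pastCone_le_of_charDeriv_le {p : ℝ × ℝ} (hσ : |σ| ≤ 1) (hf : Differentiable ℝ f)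
    (hp : p ∈ pastCone θ₀) (hsp : s₀ ≤ p.1)
    (h : ∀ q ∈ pastCone θ₀, s₀ ≤ q.1 → q.1 ≤ p.1 → charDeriv σ f q ≤ l * (f p - f q)) :
    ∃ q ∈ pastCone θ₀, q.1 = s₀ ∧ f p ≤ f q := by
  have hmono := monotoneOn_exp_mul (f := fun s => f p - f (characteristic σ p s))
    (f' := fun s => -charDeriv σ f (characteristic σ p s)) (l := l) (a := s₀) (b := p.1)
    (fun s _ => (hasDerivAt_comp_characteristic hf σ p s).const_sub (f p))
    (fun s hs => by
      linarith [h _ (characteristic_mem_pastCone hσ hp hs.2) hs.1 hs.2])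
    (left_mem_Icc.2 hsp) (right_mem_Icc.2 hsp) hsp
  refine ⟨characteristic σ p s₀, characteristic_mem_pastCone hσ hp hsp, rfl, ?_⟩
  simp only [characteristic_self, sub_self, mul_zero] at hmono
  linarith [nonpos_of_mul_nonpos_right hmono (exp_pos _)]

lemma pastCone_max_principle (hσ : |σ| ≤ 1) (hl : 0 ≤ l)
    (hf : Differentiable ℝ f) (hg : Differentiable ℝ g)
    (hf' : ∀ p ∈ pastCone θ₀, s₀ ≤ p.1 → charDeriv σ f p ≤ l * (max (g p) B - f p))
    (hg' : ∀ p ∈ pastCone θ₀, s₀ ≤ p.1 → charDeriv (-σ) g p ≤ l * (max (f p) B - g p))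
    (hslice : ∀ p ∈ pastCone θ₀, p.1 = s₀ → f p ≤ B ∧ g p ≤ B) :
    ∀ p ∈ pastCone θ₀, s₀ ≤ p.1 → f p ≤ B ∧ g p ≤ B := by
  intro p hp hsp
  obtain ⟨m, ⟨hm, hsm, hmp⟩, hmax⟩ := (isCompact_pastCone_inter θ₀ s₀ p.1).exists_isMaxOn
    ⟨p, hp, hsp, le_rfl⟩ (hf.continuous.max hg.continuous).continuousOn
  have hle_max : ∀ q ∈ pastCone θ₀, s₀ ≤ q.1 → q.1 ≤ m.1 → max (f q) (g q) ≤ max (f m) (g m) :=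
    fun q hq hsq hqm => hmax ⟨hq, hsq, hqm.trans hmp⟩
  suffices hM : max (f m) (g m) ≤ B from max_le_iff.1 ((hmax ⟨hp, hsp, le_rfl⟩).trans hM)
  by_contra! hM
  rcases max_choice (f m) (g m) with hfm | hgm
  · rw [hfm] at hM hle_max
    obtain ⟨q, hq, hqs, hle⟩ := exists_pastCone_le_of_charDeriv_le (l := l) hσ hf hm hsm
      fun q hq hsq hqm => (hf' q hq hsq).trans <| by
        gcongr
        exact max_le ((le_max_right _ _).trans (hle_max q hq hsq hqm)) hM.le
    linarith [(hslice q hq hqs).1]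
  · rw [hgm] at hM hle_max
    obtain ⟨q, hq, hqs, hle⟩ := exists_pastCone_le_of_charDeriv_le (l := l)
      ((abs_neg σ).trans_le hσ) hg hm hsm
      fun q hq hsq hqm => (hg' q hq hsq).trans <| by
        gcongr
        exact max_le ((le_max_left _ _).trans (hle_max q hq hsq hqm)) hM.le
    linarith [(hslice q hq hqs).2]

lemma exists_pastCone_bound (hσ : |σ| ≤ 1) (hl : 0 ≤ l) (θ₀ s₀ C : ℝ)
    (hf : Differentiable ℝ f) (hg : Differentiable ℝ g)
    (hf' : ∀ p ∈ pastCone θ₀, s₀ ≤ p.1 → charDeriv σ f p ≤ l * (max (g p) C - f p))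
    (hg' : ∀ p ∈ pastCone θ₀, s₀ ≤ p.1 → charDeriv (-σ) g p ≤ l * (max (f p) C - g p)) :
    ∃ B, ∀ p ∈ pastCone θ₀, s₀ ≤ p.1 → f p ≤ B ∧ g p ≤ B := by
  obtain ⟨A, hA⟩ := (isCompact_pastCone_inter θ₀ s₀ s₀).bddAbove_image
    (hf.continuous.max hg.continuous).continuousOn
  refine ⟨max A C, pastCone_max_principle hσ hl hf hg
    (fun p hp hsp => (hf' p hp hsp).trans ?_) (fun p hp hsp => (hg' p hp hsp).trans ?_)
    fun p hp hps => ?_⟩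
  · gcongr; exact le_max_right A C
  · gcongr; exact le_max_right A C
  · have hslice : max (f p) (g p) ≤ A := hA ⟨p, ⟨hp, hps.ge, hps.le⟩, rfl⟩
    exact max_le_iff.1 (hslice.trans (le_max_left A C))

end Cone

section Energies

/-- Two null energy densities `f` and `g`, carried by the two families of characteristics and
exchanging energy at rate one half up to a loss governed by the defect `W`. -/
structure NullEnergyPair (σ : ℝ) (f g W : ℝ × ℝ → ℝ) : Prop where
  sq_eq_one : σ ^ 2 = 1
  differentiable_left : Differentiable ℝ f
  differentiable_right : Differentiable ℝ g
  differentiable_defect : Differentiable ℝ W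
  nonneg_left : ∀ p, 0 ≤ f p
  nonneg_right : ∀ p, 0 ≤ g p
  nonneg_defect : ∀ p, 0 ≤ W p
  charDeriv_left : ∀ p, charDeriv σ f p = (g p - f p - W p) / 2
  charDeriv_right : ∀ p, charDeriv (-σ) g p = (f p - g p - W p) / 2

namespace NullEnergyPair

variable {σ : ℝ} {f g W : ℝ × ℝ → ℝ}

lemma symm (h : NullEnergyPair σ f g W) : NullEnergyPair (-σ) g f W where
  sq_eq_one := by rw [neg_sq, h.sq_eq_one]
  differentiable_left := h.differentiable_right
  differentiable_right := h.differentiable_left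
  differentiable_defect := h.differentiable_defect
  nonneg_left := h.nonneg_right
  nonneg_right := h.nonneg_left
  nonneg_defect := h.nonneg_defect
  charDeriv_left := h.charDeriv_right
  charDeriv_right := by simpa only [neg_neg] using h.charDeriv_left

lemma abs_le_one (h : NullEnergyPair σ f g W) : |σ| ≤ 1 := abs_le_one_of_sq_eq_one h.sq_eq_one

lemma charDeriv_left_le (h : NullEnergyPair σ f g W) (B : ℝ) (p : ℝ × ℝ) :
    charDeriv σ f p ≤ 1 / 2 * (max (g p) B - f p) := by
  rw [h.charDeriv_left]
  linarith [h.nonneg_defect p, le_max_left (g p) B]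

lemma exists_bound (h : NullEnergyPair σ f g W) (θ₀ s₀ : ℝ) :
    ∃ B, ∀ p ∈ pastCone θ₀, s₀ ≤ p.1 → f p ≤ B ∧ g p ≤ B :=
  exists_pastCone_bound h.abs_le_one one_half_pos.le θ₀ s₀ 0 h.differentiable_left
    h.differentiable_right (fun p _ _ => h.charDeriv_left_le 0 p)
    fun p _ _ => h.symm.charDeriv_left_le 0 p

lemma exists_asymptotic_max (h : NullEnergyPair σ f g W) (θ₀ : ℝ) :
    ∃ L, ∀ η > 0, (∃ s₀, ∀ p ∈ pastCone θ₀, s₀ ≤ p.1 → f p ≤ L + η ∧ g p ≤ L + η) ∧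
      ∀ T, ∃ p ∈ pastCone θ₀, p.1 = T ∧ L - η ≤ max (f p) (g p) := by
  set S := {B | ∃ s₀, ∀ p ∈ pastCone θ₀, s₀ ≤ p.1 → f p ≤ B ∧ g p ≤ B}
  have hne : S.Nonempty := let ⟨B, hB⟩ := h.exists_bound θ₀ 0; ⟨B, 0, hB⟩
  have hbdd : BddBelow S := by
    refine ⟨0, ?_⟩
    rintro B ⟨s₀, hB⟩
    exact (h.nonneg_left _).trans (hB (s₀, θ₀) (axis_mem_pastCone θ₀ s₀) le_rfl).1
  refine ⟨sInf S, fun η hη => ⟨?_, fun T => ?_⟩⟩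
  · obtain ⟨B, ⟨s₀, hB⟩, hlt⟩ := exists_lt_of_csInf_lt hne (lt_add_of_pos_right (sInf S) hη)
    exact ⟨s₀, fun p hp hs => (hB p hp hs).imp (·.trans hlt.le) (·.trans hlt.le)⟩
  · by_contra! hT
    have hmem : sInf S - η ∈ S := ⟨T, pastCone_max_principle h.abs_le_one one_half_pos.le
      h.differentiable_left h.differentiable_right (fun p _ _ => h.charDeriv_left_le _ p)
      (fun p _ _ => h.symm.charDeriv_left_le _ p) fun p hp hpT => max_le_iff.1 (hT p hp hpT).le⟩
    linarith [csInf_le hbdd hmem]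

variable {θ₀ s₀ K L : ℝ} {p : ℝ × ℝ}

lemma relaxesOn_characteristic (h : NullEnergyPair σ f g W) (hp : p ∈ pastCone θ₀)
    (hsp : s₀ + 2 ≤ p.1) (hL : ∀ q ∈ pastCone θ₀, s₀ ≤ q.1 → f q ≤ L ∧ g q ≤ L)
    (hK : ∀ q ∈ pastCone θ₀, s₀ ≤ q.1 → charDeriv σ W q - charDeriv σ g q ≤ K) :
    RelaxesOn (fun s => L - f (characteristic σ p s))
      (fun s => L - g (characteristic σ p s) + W (characteristic σ p s)) K p.1 := by
  have hmem : ∀ s ∈ Icc (p.1 - 2) p.1,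
      characteristic σ p s ∈ pastCone θ₀ ∧ s₀ ≤ (characteristic σ p s).1 := fun s hs =>
    ⟨characteristic_mem_pastCone h.abs_le_one hp hs.2, by rw [characteristic_fst]; linarith [hs.1]⟩
  have hright : ∀ s, HasDerivAt
      (fun s => L - g (characteristic σ p s) + W (characteristic σ p s))
      (-charDeriv σ g (characteristic σ p s) + charDeriv σ W (characteristic σ p s)) s := fun s =>
    ((hasDerivAt_comp_characteristic h.differentiable_right σ p s).const_sub L).add
      (hasDerivAt_comp_characteristic h.differentiable_defect σ p s)
  refine ⟨fun s _ => ?_, fun s => (hright s).differentiableAt, fun s hs => ?_, fun s hs => ?_,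
    fun s hs => ?_⟩
  · refine ((hasDerivAt_comp_characteristic h.differentiable_left σ p s).const_sub L).congr_deriv ?_
    rw [h.charDeriv_left]
    ring
  · rw [(hright s).deriv]
    linarith [hK _ (hmem s hs).1 (hmem s hs).2]
  · exact sub_nonneg.2 (hL _ (hmem s hs).1 (hmem s hs).2).1
  · linarith [(hL _ (hmem s hs).1 (hmem s hs).2).2, h.nonneg_defect (characteristic σ p s)]

/-- From `p`, one relaxation along a characteristic controls the energy `g` at the turning point of
the zigzag; this starts a second relaxation, in which the roles of `f` and `g` are exchanged. -/
lemma exists_forall_abs_axis_le (h : NullEnergyPair σ f g W) (K : ℝ) {δ : ℝ} (hδ : 0 < δ) :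
    ∃ η > 0, ∀ {θ₀ s₀ L : ℝ} {p : ℝ × ℝ}, p ∈ pastCone θ₀ → s₀ + 3 ≤ p.1 →
      (∀ q ∈ pastCone θ₀, s₀ ≤ q.1 → f q ≤ L ∧ g q ≤ L) →
      (∀ q ∈ pastCone θ₀, s₀ ≤ q.1 → charDeriv σ W q - charDeriv σ g q ≤ K ∧
        charDeriv (-σ) W q - charDeriv (-σ) f q ≤ K) → L - f p ≤ η →
      |(f (p.1 - log 2, θ₀) + g (p.1 - log 2, θ₀)) / 2 - W (p.1 - log 2, θ₀) / 4 - L| ≤ δ := by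
  obtain ⟨η', hη', hsecond⟩ := exists_forall_relaxesOn_le K hδ
  obtain ⟨η, hη, hfirst⟩ := exists_forall_relaxesOn_le K hη'
  refine ⟨η, hη, fun {θ₀ s₀ L p} hp hsp hL hK hpL => ?_⟩
  have hlog : log 2 ≤ 1 := by linarith [log_two_lt_d9]
  obtain ⟨s, ⟨hs, hsp'⟩, hzigzag⟩ := exists_characteristic_zigzag h.sq_eq_one hp
  have hq : characteristic σ p s ∈ pastCone θ₀ := characteristic_mem_pastCone h.abs_le_one hp hsp'
  have hturn : L - g (characteristic σ p s) ≤ η' := by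
    have hrelax := h.relaxesOn_characteristic hp (by linarith) hL fun q hq hsq => (hK q hq hsq).1
    linarith [(hfirst hrelax (by simpa using hpL) s ⟨by linarith, hsp'⟩).2,
      h.nonneg_defect (characteristic σ p s)]
  have hrelax := h.symm.relaxesOn_characteristic hq (by rw [characteristic_fst]; linarith)
    (fun q hq hsq => (hL q hq hsq).symm) fun q hq hsq => (hK q hq hsq).2
  obtain ⟨hg, hfW⟩ := hsecond hrelax (by simpa only [characteristic_self] using hturn) (p.1 - log 2)
    ⟨by rw [characteristic_fst]; linarith, hs⟩
  rw [hzigzag] at hg hfW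
  obtain ⟨hfL, hgL⟩ := hL (p.1 - log 2, θ₀) (axis_mem_pastCone _ _) (by dsimp only; linarith)
  have hW := h.nonneg_defect (p.1 - log 2, θ₀)
  rw [abs_le]
  constructor <;> linarith

lemma exists_tendsto_axis (h : NullEnergyPair σ f g W) (hK : ∀ q ∈ pastCone θ₀, 0 ≤ q.1 →
      charDeriv σ W q - charDeriv σ g q ≤ K ∧ charDeriv (-σ) W q - charDeriv (-σ) f q ≤ K) :
    ∃ L, Tendsto (fun s => (f (s, θ₀) + g (s, θ₀)) / 2 - W (s, θ₀) / 4) atTop (𝓝 L) := by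
  obtain ⟨L, hL⟩ := h.exists_asymptotic_max θ₀
  refine ⟨L, Metric.tendsto_atTop.2 fun ε hε => ?_⟩
  obtain ⟨η₁, hη₁, hleft⟩ := h.exists_forall_abs_axis_le K (half_pos hε)
  obtain ⟨η₂, hη₂, hright⟩ := h.symm.exists_forall_abs_axis_le K (half_pos hε)
  set η := min (min η₁ η₂ / 2) (ε / 4)
  have hη : 0 < η := by positivity
  have hη_le₁ : 2 * η ≤ η₁ := by linarith [min_le_left (min η₁ η₂ / 2) (ε / 4), min_le_left η₁ η₂]
  have hη_le₂ : 2 * η ≤ η₂ := by linarith [min_le_left (min η₁ η₂ / 2) (ε / 4), min_le_right η₁ η₂]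
  obtain ⟨⟨s₀, hs₀⟩, hmax⟩ := hL η hη
  refine ⟨max s₀ 0 + 3, fun s hs => ?_⟩
  obtain ⟨p, hp, hps, hpL⟩ := hmax (s + log 2)
  have hsp : max s₀ 0 + 3 ≤ p.1 := by linarith [log_nonneg one_le_two]
  have hbound : ∀ q ∈ pastCone θ₀, max s₀ 0 ≤ q.1 → f q ≤ L + η ∧ g q ≤ L + η :=
    fun q hq hsq => hs₀ q hq ((le_max_left _ _).trans hsq)
  have hK' := fun q hq (hsq : max s₀ 0 ≤ q.1) => hK q hq ((le_max_right _ _).trans hsq)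
  have haxis : |(f (s, θ₀) + g (s, θ₀)) / 2 - W (s, θ₀) / 4 - (L + η)| ≤ ε / 2 := by
    rw [← add_sub_cancel_right s (log 2), ← hps]
    rcases le_max_iff.1 hpL with hpf | hpg
    · exact hleft hp hsp hbound hK' (by linarith)
    · rw [add_comm (f _)]
      exact hright hp hsp (fun q hq hsq => (hbound q hq hsq).symm)
        (fun q hq hsq => by simpa only [neg_neg] using (hK' q hq hsq).symm) (by linarith)
  rw [Real.dist_eq, abs_lt]
  have hη_le : η ≤ ε / 4 := min_le_right _ _
  constructor <;> linarith [abs_le.1 haxis]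

end NullEnergyPair

end Energies

section NullFrame

open Complex (I)

lemma two_mul_real_inner_le_add_sq {H : Type*} [NormedAddCommGroup H] [InnerProductSpace ℝ H]
    (x y : H) : 2 * ⟪x, y⟫ ≤ ‖x‖ ^ 2 + ‖y‖ ^ 2 := by
  linarith [norm_sub_sq_real x y, sq_nonneg ‖x - y‖]

lemma lieDeriv_ofReal_im {E : Type*} [NormedAddCommGroup E] [NormedSpace ℝ E] {V : E → E} {x : E}
    {f : E → ℂ} (hf : DifferentiableAt ℝ f x) :
    lieDeriv V (fun y => ((f y).im : ℂ)) x = (lieDeriv V f x).im :=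
  lieDeriv_clm_comp (Complex.ofRealCLM.comp Complex.imCLM) hf

lemma charDeriv_norm_sq_of_eq_rotation_add {σ α : ℝ} {F : ℝ × ℝ → ℂ} {p : ℝ × ℝ} {R : ℂ}
    (hF : DifferentiableAt ℝ F p) (h : charDeriv σ F p = -(I * α) * F p + R) :
    charDeriv σ (fun q => ‖F q‖ ^ 2) p = 2 * ⟪F p, R⟫ := by
  have hskew : ⟪F p, -(I * α) * F p⟫ = 0 := by
    simp only [Complex.inner, Complex.mul_re, Complex.mul_im, Complex.neg_re, Complex.neg_im,
      Complex.conj_re, Complex.conj_im, Complex.I_re, Complex.I_im, Complex.ofReal_re,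
      Complex.ofReal_im]
    ring
  rw [charDeriv, lieDeriv_norm_sq hF, ← charDeriv, h, inner_add_right, hskew, zero_add]

/-- The components `z` and `w` along the null directions `charField (-σ)` and `charField σ` of the
differential of a Gowdy map into the hyperbolic plane, with respect to an orthonormal frame of the
target. The imaginary coefficients come from the connection form of that frame. -/
structure NullFrameSystem (σ : ℝ) (z w : ℝ × ℝ → ℂ) : Prop where
  sq_eq_one : σ ^ 2 = 1
  contDiff_left : ContDiff ℝ 2 z
  contDiff_right : ContDiff ℝ 2 w
  charDeriv_left : ∀ p, charDeriv σ z p = -(I * (w p).im) * z p + (w p - z p) / 2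
  charDeriv_right : ∀ p, charDeriv (-σ) w p = -(I * (z p).im) * w p + (z p - w p) / 2

/-- The covariant derivative of the null component `z` along `σ e^{-τ} ∂θ`. -/
def covDeriv (σ : ℝ) (z w : ℝ × ℝ → ℂ) (p : ℝ × ℝ) : ℂ :=
  σ * spaceDeriv z p + I / 2 * ((z p).im - (w p).im) * z p

namespace NullFrameSystem

variable {σ : ℝ} {z w : ℝ × ℝ → ℂ}

lemma symm (h : NullFrameSystem σ z w) : NullFrameSystem (-σ) w z where
  sq_eq_one := by rw [neg_sq, h.sq_eq_one]
  contDiff_left := h.contDiff_right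
  contDiff_right := h.contDiff_left
  charDeriv_left := h.charDeriv_right
  charDeriv_right := by simpa only [neg_neg] using h.charDeriv_left

lemma differentiable_left (h : NullFrameSystem σ z w) : Differentiable ℝ z :=
  h.contDiff_left.differentiable two_ne_zero

lemma differentiable_right (h : NullFrameSystem σ z w) : Differentiable ℝ w :=
  h.symm.differentiable_left

lemma charDeriv_norm_sq_left (h : NullFrameSystem σ z w) (p : ℝ × ℝ) :
    charDeriv σ (fun q => ‖z q‖ ^ 2) p = (‖w p‖ ^ 2 - ‖z p‖ ^ 2 - ‖z p - w p‖ ^ 2) / 2 := by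
  have hhalf : (w p - z p) / 2 = (2⁻¹ : ℝ) • (w p - z p) := by simp [div_eq_inv_mul]
  rw [charDeriv_norm_sq_of_eq_rotation_add (h.differentiable_left p) (h.charDeriv_left p), hhalf,
    real_inner_smul_right, inner_sub_right, real_inner_self_eq_norm_sq, norm_sub_sq_real]
  ring

lemma nullEnergyPair (h : NullFrameSystem σ z w) :
    NullEnergyPair σ (fun p => ‖z p‖ ^ 2) (fun p => ‖w p‖ ^ 2) (fun p => ‖z p - w p‖ ^ 2) where
  sq_eq_one := h.sq_eq_one
  differentiable_left := h.differentiable_left.norm_sq ℝ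
  differentiable_right := h.differentiable_right.norm_sq ℝ
  differentiable_defect := (h.differentiable_left.sub h.differentiable_right).norm_sq ℝ
  nonneg_left _ := sq_nonneg _
  nonneg_right _ := sq_nonneg _
  nonneg_defect _ := sq_nonneg _
  charDeriv_left := h.charDeriv_norm_sq_left
  charDeriv_right p := by
    rw [norm_sub_rev]
    exact h.symm.charDeriv_norm_sq_left p

lemma charDeriv_right_eq (h : NullFrameSystem σ z w) (p : ℝ × ℝ) :
    charDeriv σ w p = -(I * (w p).im) * w p + (z p - w p) / 2 + 2 * covDeriv (-σ) w z p := by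
  rw [charDeriv_eq_add_smul_spaceDeriv σ (-σ), h.charDeriv_right, covDeriv, Complex.real_smul]
  push_cast
  ring

lemma differentiable_spaceDeriv (h : NullFrameSystem σ z w) : Differentiable ℝ (spaceDeriv z) :=
  (contDiff_lieDeriv h.contDiff_left (contDiff_spaceField (n := 1)) le_rfl).differentiable
    one_ne_zero

lemma differentiable_covDeriv (h : NullFrameSystem σ z w) :
    Differentiable ℝ (covDeriv σ z w) := by
  have hz := h.differentiable_left
  have hw := h.differentiable_right
  have hspace := h.differentiable_spaceDeriv
  unfold covDeriv
  fun_prop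

lemma spaceDeriv_charDeriv_left (h : NullFrameSystem σ z w) (p : ℝ × ℝ) :
    spaceDeriv (charDeriv σ z) p = -(I * (spaceDeriv w p).im) * z p
      - I * (w p).im * spaceDeriv z p + (spaceDeriv w p - spaceDeriv z p) / 2 := by
  have hz := h.differentiable_left
  have hw := h.differentiable_right
  have heq : charDeriv σ z = fun q => -I * ((w q).im * z q) + 2⁻¹ * (w q - z q) := by
    funext q
    rw [h.charDeriv_left]
    ring
  simp (disch := fun_prop) only [heq, lieDeriv_add, lieDeriv_sub, lieDeriv_mul, lieDeriv_const,
    lieDeriv_ofReal_im]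
  ring

/-- The last term comes from the curvature `-1` of the hyperbolic plane. -/
lemma charDeriv_covDeriv (h : NullFrameSystem σ z w) (p : ℝ × ℝ) :
    charDeriv σ (covDeriv σ z w) p = -(I * (w p).im) * covDeriv σ z w p
      - 3 / 2 * covDeriv σ z w p - 1 / 2 * covDeriv (-σ) w z p
      + I / 2 * (z p * conj (w p)).im * z p := by
  have hleibniz : charDeriv σ (covDeriv σ z w) p = σ * charDeriv σ (spaceDeriv z) p
      + (I / 2 * ((charDeriv σ z p).im - (charDeriv σ w p).im) * z p
        + I / 2 * ((z p).im - (w p).im) * charDeriv σ z p) := by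
    have hz := h.differentiable_left
    have hw := h.differentiable_right
    have hspace := h.differentiable_spaceDeriv
    change lieDeriv _ (fun q => σ * spaceDeriv z q + I / 2 * ((z q).im - (w q).im) * z q) p = _
    simp (disch := fun_prop) only [lieDeriv_add, lieDeriv_sub, lieDeriv_mul, lieDeriv_const,
      lieDeriv_ofReal_im]
    ring
  rw [hleibniz, charDeriv_spaceDeriv h.contDiff_left, h.spaceDeriv_charDeriv_left,
    h.charDeriv_left, h.charDeriv_right_eq]
  apply Complex.ext <;> simp [covDeriv] <;> ring

lemma charDeriv_norm_sq_covDeriv_le (h : NullFrameSystem σ z w) (p : ℝ × ℝ) :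
    charDeriv σ (fun q => ‖covDeriv σ z w q‖ ^ 2) p ≤ 1 / 2 * ‖covDeriv (-σ) w z p‖ ^ 2
      - 3 / 2 * ‖covDeriv σ z w p‖ ^ 2 + 1 / 4 * ((z p * conj (w p)).im ^ 2 * ‖z p‖ ^ 2) := by
  set Y := covDeriv σ z w p
  set Y' := covDeriv (-σ) w z p
  set v := I / 2 * (z p * conj (w p)).im * z p with hv
  have hnorm : ‖v‖ ^ 2 = 1 / 4 * ((z p * conj (w p)).im ^ 2 * ‖z p‖ ^ 2) := by
    simp only [hv, norm_mul, norm_div, Complex.norm_I, Complex.norm_ofNat, Complex.norm_real,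
      mul_pow, norm_eq_abs, sq_abs]
    ring
  have hderiv : charDeriv σ (fun q => ‖covDeriv σ z w q‖ ^ 2) p
      = 2 * ⟪Y, (-(3 / 2) : ℝ) • Y - (1 / 2 : ℝ) • Y' + v⟫ :=
    charDeriv_norm_sq_of_eq_rotation_add (h.differentiable_covDeriv p) (α := (w p).im) <| by
      rw [h.charDeriv_covDeriv]
      simp only [Complex.real_smul]
      push_cast
      ring
  have hY' := two_mul_real_inner_le_add_sq Y (-Y')
  rw [norm_neg, inner_neg_right] at hY'
  rw [hderiv, inner_add_right, inner_sub_right, real_inner_smul_right, real_inner_smul_right,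
    real_inner_self_eq_norm_sq, ← hnorm]
  linarith [two_mul_real_inner_le_add_sq Y v]

lemma sq_im_mul_conj_mul_norm_sq_le {a b : ℂ} {B : ℝ} (ha : ‖a‖ ^ 2 ≤ B) (hb : ‖b‖ ^ 2 ≤ B) :
    (a * conj b).im ^ 2 * ‖a‖ ^ 2 ≤ B ^ 3 := by
  have him : (a * conj b).im ^ 2 ≤ ‖a‖ ^ 2 * ‖b‖ ^ 2 := by
    rw [← mul_pow, ← Complex.norm_conj b, ← norm_mul, ← sq_abs]
    gcongr
    exact Complex.abs_im_le_norm _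
  have hB : 0 ≤ B := (sq_nonneg _).trans ha
  calc (a * conj b).im ^ 2 * ‖a‖ ^ 2 ≤ ‖a‖ ^ 2 * ‖b‖ ^ 2 * ‖a‖ ^ 2 := by gcongr
    _ ≤ B * B * B := by gcongr
    _ = B ^ 3 := by ring

lemma exists_covDeriv_bound (h : NullFrameSystem σ z w) (θ₀ s₀ : ℝ) :
    ∃ D, ∀ p ∈ pastCone θ₀, s₀ ≤ p.1 →
      ‖covDeriv σ z w p‖ ^ 2 ≤ D ∧ ‖covDeriv (-σ) w z p‖ ^ 2 ≤ D := by
  obtain ⟨B, hB⟩ := h.nullEnergyPair.exists_bound θ₀ s₀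
  have hB_nonneg : 0 ≤ B ^ 3 :=
    pow_nonneg ((sq_nonneg _).trans (hB (s₀, θ₀) (axis_mem_pastCone θ₀ s₀) le_rfl).1) 3
  refine exists_pastCone_bound (l := 3 / 2) h.nullEnergyPair.abs_le_one (by norm_num) θ₀ s₀ (B ^ 3)
    (h.differentiable_covDeriv.norm_sq ℝ) (h.symm.differentiable_covDeriv.norm_sq ℝ)
    (fun p hp hsp => (h.charDeriv_norm_sq_covDeriv_le p).trans ?_)
    (fun p hp hsp => (h.symm.charDeriv_norm_sq_covDeriv_le p).trans ?_)
  · linarith [sq_im_mul_conj_mul_norm_sq_le (hB p hp hsp).1 (hB p hp hsp).2,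
      le_max_left (‖covDeriv (-σ) w z p‖ ^ 2) (B ^ 3),
      le_max_right (‖covDeriv (-σ) w z p‖ ^ 2) (B ^ 3)]
  · rw [neg_neg]
    linarith [sq_im_mul_conj_mul_norm_sq_le (hB p hp hsp).2 (hB p hp hsp).1,
      le_max_left (‖covDeriv σ z w p‖ ^ 2) (B ^ 3), le_max_right (‖covDeriv σ z w p‖ ^ 2) (B ^ 3)]

lemma charDeriv_defect_sub_charDeriv_right_le (h : NullFrameSystem σ z w) (p : ℝ × ℝ) :
    charDeriv σ (fun q => ‖z q - w q‖ ^ 2) p - charDeriv σ (fun q => ‖w q‖ ^ 2) p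
      ≤ 2 * ‖z p‖ ^ 2 + ‖w p‖ ^ 2 + 2 * ‖covDeriv (-σ) w z p‖ ^ 2 := by
  set Y' := covDeriv (-σ) w z p
  have hsub : charDeriv σ (fun q => z q - w q) p = charDeriv σ z p - charDeriv σ w p :=
    lieDeriv_sub (h.differentiable_left p) (h.differentiable_right p)
  have hdefect : charDeriv σ (fun q => ‖z q - w q‖ ^ 2) p
      = 2 * ⟪z p - w p, -(z p - w p) - (2 : ℝ) • Y'⟫ :=
    charDeriv_norm_sq_of_eq_rotation_add (α := (w p).im)
      ((h.differentiable_left p).sub (h.differentiable_right p)) <| by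
      rw [hsub, h.charDeriv_left, h.charDeriv_right_eq]
      simp only [Complex.real_smul]
      push_cast
      ring
  have hright : charDeriv σ (fun q => ‖w q‖ ^ 2) p
      = 2 * ⟪w p, (1 / 2 : ℝ) • (z p - w p) + (2 : ℝ) • Y'⟫ :=
    charDeriv_norm_sq_of_eq_rotation_add (α := (w p).im) (h.differentiable_right p) <| by
      rw [h.charDeriv_right_eq]
      simp only [Complex.real_smul]
      push_cast
      ring
  have hz := two_mul_real_inner_le_add_sq (z p) (-Y')
  have hw := two_mul_real_inner_le_add_sq (w p) (-(z p - w p))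
  rw [norm_neg, inner_neg_right] at hz hw
  rw [hdefect, hright, inner_sub_right, inner_add_right, inner_neg_right, real_inner_smul_right,
    real_inner_smul_right, real_inner_smul_right, real_inner_self_eq_norm_sq, inner_sub_left]
  linarith [sq_nonneg ‖z p - w p‖, sq_nonneg ‖w p‖]

lemma exists_tendsto_axis (h : NullFrameSystem σ z w) (θ₀ : ℝ) :
    ∃ L, Tendsto (fun s => ‖z (s, θ₀) + w (s, θ₀)‖ ^ 2 / 4) atTop (𝓝 L) := by
  obtain ⟨B, hB⟩ := h.nullEnergyPair.exists_bound θ₀ 0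
  obtain ⟨D, hD⟩ := h.exists_covDeriv_bound θ₀ 0
  obtain ⟨L, hL⟩ := h.nullEnergyPair.exists_tendsto_axis (θ₀ := θ₀) (K := 3 * B + 2 * D) <| by
    intro p hp hp₀
    obtain ⟨hzB, hwB⟩ := hB p hp hp₀
    obtain ⟨hYD, hYD'⟩ := hD p hp hp₀
    have hleft := h.charDeriv_defect_sub_charDeriv_right_le p
    have hright := h.symm.charDeriv_defect_sub_charDeriv_right_le p
    simp only [norm_sub_rev (w _), neg_neg] at hright
    constructor <;> linarith
  refine ⟨L, hL.congr fun s => ?_⟩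
  linarith [parallelogram_law_with_norm ℝ (z (s, θ₀)) (w (s, θ₀))]

end NullFrameSystem

end NullFrame

section GowdySystem

open Complex (I)

lemma lieDeriv_ofReal {E : Type*} [NormedAddCommGroup E] [NormedSpace ℝ E] {V : E → E} {x : E}
    {f : E → ℝ} (hf : DifferentiableAt ℝ f x) :
    lieDeriv V (fun y => (f y : ℂ)) x = lieDeriv V f x :=
  lieDeriv_clm_comp Complex.ofRealCLM hf

/-- The wave operator `∂τ² - e^{-2τ} ∂θ²`. -/
def waveOp (f : ℝ × ℝ → ℝ) (p : ℝ × ℝ) : ℝ :=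
  charDeriv 0 (charDeriv 0 f) p - spaceDeriv (spaceDeriv f) p

/-- The null form `∂τf ∂τg - e^{-2τ} ∂θf ∂θg`. -/
def nullForm (f g : ℝ × ℝ → ℝ) (p : ℝ × ℝ) : ℝ :=
  charDeriv 0 f p * charDeriv 0 g p - spaceDeriv f p * spaceDeriv g p

/-- A `C³` solution `(P, Q) = (u, v)` of the Gowdy system, as a pair of functions on the plane. -/
structure IsGowdySolution (u v : ℝ × ℝ → ℝ) : Prop where
  contDiff_left : ContDiff ℝ 3 u
  contDiff_right : ContDiff ℝ 3 v
  waveOp_left : ∀ p, waveOp u p = exp (2 * u p) * nullForm v v p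
  waveOp_right : ∀ p, waveOp v p = -2 * nullForm u v p

variable {σ : ℝ} {f g : ℝ × ℝ → ℝ} {p : ℝ × ℝ}

lemma contDiff_charDeriv {n : WithTop ℕ∞} (hf : ContDiff ℝ (n + 1) f) (σ : ℝ) :
    ContDiff ℝ n (charDeriv σ f) :=
  contDiff_lieDeriv hf (contDiff_charField σ) le_rfl

lemma contDiff_spaceDeriv {n : WithTop ℕ∞} (hf : ContDiff ℝ (n + 1) f) :
    ContDiff ℝ n (spaceDeriv f) :=
  contDiff_lieDeriv hf contDiff_spaceField le_rfl

lemma charDeriv_eq_sub (σ : ℝ) (f : ℝ × ℝ → ℝ) (p : ℝ × ℝ) :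
    charDeriv σ f p = charDeriv 0 f p - σ * spaceDeriv f p := by
  rw [charDeriv_eq_add_smul_spaceDeriv σ 0, smul_eq_mul]
  ring

lemma charDeriv_charDeriv_neg (hσ : σ ^ 2 = 1) (hf : ContDiff ℝ 2 f) (p : ℝ × ℝ) :
    charDeriv σ (charDeriv (-σ) f) p
      = waveOp f p + (charDeriv σ f p - charDeriv (-σ) f p) / 2 := by
  have htime : Differentiable ℝ (charDeriv 0 f) :=
    (contDiff_charDeriv (n := 1) hf 0).differentiable one_ne_zero
  have hspace : Differentiable ℝ (spaceDeriv f) :=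
    (contDiff_spaceDeriv (n := 1) hf).differentiable one_ne_zero
  have hsplit : charDeriv (-σ) f = fun q => charDeriv 0 f q + σ * spaceDeriv f q := by
    funext q
    rw [charDeriv_eq_sub]
    ring
  have hexpand (V : ℝ × ℝ → ℝ × ℝ) : lieDeriv V (charDeriv (-σ) f) p
      = lieDeriv V (charDeriv 0 f) p + σ * lieDeriv V (spaceDeriv f) p := by
    simp (disch := fun_prop) only [hsplit, lieDeriv_add, lieDeriv_mul, lieDeriv_const]
    ring
  have hchar : charDeriv 0 (charDeriv (-σ) f) p
      = charDeriv 0 (charDeriv 0 f) p + σ * charDeriv 0 (spaceDeriv f) p := hexpand _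
  have hspaceDeriv : spaceDeriv (charDeriv (-σ) f) p
      = spaceDeriv (charDeriv 0 f) p + σ * spaceDeriv (spaceDeriv f) p := hexpand _
  rw [charDeriv_eq_sub σ (charDeriv _ f), hchar, hspaceDeriv, charDeriv_spaceDeriv hf,
    charDeriv_eq_sub σ f, charDeriv_eq_sub (-σ) f, waveOp]
  linear_combination -spaceDeriv (spaceDeriv f) p * hσ

lemma charDeriv_mul_charDeriv_neg_add (hσ : σ ^ 2 = 1) (f g : ℝ × ℝ → ℝ) (p : ℝ × ℝ) :
    charDeriv σ f p * charDeriv (-σ) g p + charDeriv (-σ) f p * charDeriv σ g p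
      = 2 * nullForm f g p := by
  rw [charDeriv_eq_sub σ f, charDeriv_eq_sub σ g, charDeriv_eq_sub (-σ) f, charDeriv_eq_sub (-σ) g,
    nullForm]
  linear_combination -2 * spaceDeriv f p * spaceDeriv g p * hσ

/-- The component of the differential of the map `(u, v)` along `charField (-σ)`, with respect to
the frame `∂_P`, `e^{-P} ∂_Q` of the hyperbolic plane `dP² + e^{2P} dQ²`, as a complex number. -/
def nullComponent (σ : ℝ) (u v : ℝ × ℝ → ℝ) (p : ℝ × ℝ) : ℂ :=
  charDeriv (-σ) u p + (exp (u p) * charDeriv (-σ) v p : ℝ) * I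

lemma norm_sq_nullComponent_add (u v : ℝ × ℝ → ℝ) (p : ℝ × ℝ) :
    ‖nullComponent σ u v p + nullComponent (-σ) u v p‖ ^ 2 / 4
      = charDeriv 0 u p ^ 2 + exp (2 * u p) * charDeriv 0 v p ^ 2 := by
  have hsum : nullComponent σ u v p + nullComponent (-σ) u v p
      = ((2 * charDeriv 0 u p : ℝ) : ℂ) + (2 * (exp (u p) * charDeriv 0 v p) : ℝ) * I := by
    simp only [nullComponent, charDeriv_eq_sub (-σ), charDeriv_eq_sub (- -σ)]
    push_cast
    ring
  rw [hsum, Complex.sq_norm, Complex.normSq_add_mul_I, two_mul (u p), exp_add]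
  ring

namespace IsGowdySolution

variable {u v : ℝ × ℝ → ℝ}

lemma contDiff_nullComponent (h : IsGowdySolution u v) (σ : ℝ) :
    ContDiff ℝ 2 (nullComponent σ u v) := by
  have hexp : ContDiff ℝ 2 fun p => exp (u p) := (h.contDiff_left.of_le (by norm_num)).exp
  exact (Complex.ofRealCLM.contDiff.comp (contDiff_charDeriv h.contDiff_left (-σ))).add
    ((Complex.ofRealCLM.contDiff.comp
      (hexp.mul (contDiff_charDeriv h.contDiff_right (-σ)))).mul contDiff_const)

lemma charDeriv_nullComponent (h : IsGowdySolution u v) (hσ : σ ^ 2 = 1) (p : ℝ × ℝ) :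
    charDeriv σ (nullComponent σ u v) p
      = -(I * (nullComponent (-σ) u v p).im) * nullComponent σ u v p
        + (nullComponent (-σ) u v p - nullComponent σ u v p) / 2 := by
  have hu : ContDiff ℝ 2 u := h.contDiff_left.of_le (by norm_num)
  have hv : ContDiff ℝ 2 v := h.contDiff_right.of_le (by norm_num)
  have hleibniz : charDeriv σ (nullComponent σ u v) p = charDeriv σ (charDeriv (-σ) u) p
      + (exp (u p) * (charDeriv σ u p * charDeriv (-σ) v p
        + charDeriv σ (charDeriv (-σ) v) p) : ℝ) * I := by
    have hu' := hu.differentiable two_ne_zero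
    have hnu := (contDiff_charDeriv (n := 1) hu (-σ)).differentiable one_ne_zero
    have hnv := (contDiff_charDeriv (n := 1) hv (-σ)).differentiable one_ne_zero
    change lieDeriv _ (fun q => ((charDeriv (-σ) u q : ℝ) : ℂ)
      + (exp (u q) * charDeriv (-σ) v q : ℝ) * I) p = _
    simp (disch := fun_prop) only [lieDeriv_add, lieDeriv_mul, lieDeriv_const, lieDeriv_ofReal,
      lieDeriv_exp]
    push_cast
    ring
  have hexp : exp (2 * u p) = exp (u p) * exp (u p) := by rw [two_mul, exp_add]
  rw [hleibniz, charDeriv_charDeriv_neg hσ hu, charDeriv_charDeriv_neg hσ hv, h.waveOp_left,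
    h.waveOp_right, hexp]
  have hvv := charDeriv_mul_charDeriv_neg_add hσ v v p
  have huv := charDeriv_mul_charDeriv_neg_add hσ u v p
  simp only [nullComponent, neg_neg]
  generalize exp (u p) = E
  apply Complex.ext <;> simp
  · linear_combination -E ^ 2 / 2 * hvv
  · linear_combination E * huv

lemma nullFrameSystem (h : IsGowdySolution u v) :
    NullFrameSystem 1 (nullComponent 1 u v) (nullComponent (-1) u v) where
  sq_eq_one := one_pow 2
  contDiff_left := h.contDiff_nullComponent 1
  contDiff_right := h.contDiff_nullComponent (-1)
  charDeriv_left := h.charDeriv_nullComponent (one_pow 2)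
  charDeriv_right := by
    simpa only [neg_neg] using h.charDeriv_nullComponent (σ := -1) (by norm_num)

lemma exists_tendsto_axis (h : IsGowdySolution u v) (θ₀ : ℝ) :
    ∃ L, Tendsto (fun s => charDeriv 0 u (s, θ₀) ^ 2
      + exp (2 * u (s, θ₀)) * charDeriv 0 v (s, θ₀) ^ 2) atTop (𝓝 L) := by
  simpa only [norm_sq_nullComponent_add] using h.nullFrameSystem.exists_tendsto_axis θ₀

end IsGowdySolution

lemma charDeriv_zero_eq_deriv (hf : Differentiable ℝ f) (p : ℝ × ℝ) :
    charDeriv 0 f p = deriv (fun s => f (s, p.2)) p.1 := by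
  have hline : HasDerivAt (fun s : ℝ => (s, p.2)) (charField 0 (p.1, p.2)) p.1 :=
    ((hasDerivAt_id _).prodMk (hasDerivAt_const _ _)).congr_deriv (by simp [charField])
  exact (hasDerivAt_comp_of_hasDerivAt_field hf hline).deriv.symm

lemma spaceDeriv_eq_exp_mul_deriv (hf : Differentiable ℝ f) (p : ℝ × ℝ) :
    spaceDeriv f p = exp (-p.1) * deriv (fun x => f (p.1, x)) p.2 := by
  have hline : HasDerivAt (fun x : ℝ => (p.1, x)) (0, 1) p.2 :=
    (hasDerivAt_const _ _).prodMk (hasDerivAt_id _)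
  have hderiv : deriv (fun x => f (p.1, x)) p.2 = fderiv ℝ f p (0, 1) :=
    ((hf p).hasFDerivAt.comp_hasDerivAt p.2 hline).deriv
  rw [hderiv, ← smul_eq_mul, ← map_smul]
  simp [lieDeriv, spaceField]

lemma waveOp_eq (hf : ContDiff ℝ 2 f) (τ θ : ℝ) :
    waveOp f (τ, θ) = deriv (fun s => deriv (fun s' => f (s', θ)) s) τ
      - exp (-2 * τ) * deriv (deriv fun x => f (τ, x)) θ := by
  have hf' := hf.differentiable two_ne_zero
  have htime := (contDiff_charDeriv (n := 1) hf 0).differentiable one_ne_zero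
  have hspace := (contDiff_spaceDeriv (n := 1) hf).differentiable one_ne_zero
  have hexp : exp (-2 * τ) = exp (-τ) * exp (-τ) := by rw [← exp_add]; ring_nf
  rw [waveOp, charDeriv_zero_eq_deriv htime, spaceDeriv_eq_exp_mul_deriv hspace, hexp, mul_assoc]
  simp only [charDeriv_zero_eq_deriv hf', spaceDeriv_eq_exp_mul_deriv hf', deriv_const_mul_field]

lemma nullForm_eq (hf : Differentiable ℝ f) (hg : Differentiable ℝ g) (τ θ : ℝ) :
    nullForm f g (τ, θ) = deriv (fun s => f (s, θ)) τ * deriv (fun s => g (s, θ)) τ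
      - exp (-2 * τ) * deriv (fun x => f (τ, x)) θ * deriv (fun x => g (τ, x)) θ := by
  have hexp : exp (-2 * τ) = exp (-τ) * exp (-τ) := by rw [← exp_add]; ring_nf
  rw [nullForm, charDeriv_zero_eq_deriv hf, charDeriv_zero_eq_deriv hg,
    spaceDeriv_eq_exp_mul_deriv hf, spaceDeriv_eq_exp_mul_deriv hg, hexp]
  ring

end GowdySystem

end Gowdy

end

theorem gowdy_asymptotic_velocity_exists_general
    (P Q : ℝ → ℝ → ℝ)
    (hP : ContDiff ℝ 3 (fun p : ℝ × ℝ => P p.1 p.2))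
    (hQ : ContDiff ℝ 3 (fun p : ℝ × ℝ => Q p.1 p.2))
    (hPwave : ∀ τ θ : ℝ, deriv (fun s => deriv (fun s' => P s' θ) s) τ
      = Real.exp (-2 * τ) * deriv (deriv (P τ)) θ
        + Real.exp (2 * P τ θ) * ((deriv (fun s => Q s θ) τ) ^ 2
          - Real.exp (-2 * τ) * (deriv (Q τ) θ) ^ 2))
    (hQwave : ∀ τ θ : ℝ, deriv (fun s => deriv (fun s' => Q s' θ) s) τ
      = Real.exp (-2 * τ) * deriv (deriv (Q τ)) θ
        - 2 * (deriv (fun s => P s θ) τ * deriv (fun s => Q s θ) τ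
          - Real.exp (-2 * τ) * deriv (P τ) θ * deriv (Q τ) θ))
    (θ : ℝ) :
    ∃ V : ℝ, 0 ≤ V ∧
      Tendsto (fun τ => Real.sqrt ((deriv (fun s => P s θ) τ) ^ 2
        + Real.exp (2 * P τ θ) * (deriv (fun s => Q s θ) τ) ^ 2)) atTop (nhds V) := by
  have hP' := hP.differentiable three_ne_zero
  have hQ' := hQ.differentiable three_ne_zero
  have hsol : Gowdy.IsGowdySolution (fun p => P p.1 p.2) (fun p => Q p.1 p.2) := by
    refine ⟨hP, hQ, fun ⟨τ, θ⟩ => ?_, fun ⟨τ, θ⟩ => ?_⟩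
    · rw [Gowdy.waveOp_eq (hP.of_le (by norm_num)), Gowdy.nullForm_eq hQ' hQ']
      linear_combination hPwave τ θ
    · rw [Gowdy.waveOp_eq (hQ.of_le (by norm_num)), Gowdy.nullForm_eq hP' hQ']
      linear_combination hQwave τ θ
  obtain ⟨L, hL⟩ := hsol.exists_tendsto_axis θ
  simp only [Gowdy.charDeriv_zero_eq_deriv hP', Gowdy.charDeriv_zero_eq_deriv hQ'] at hL
  exact ⟨√L, Real.sqrt_nonneg L, hL.sqrt⟩

/-- Existence of Ringström's asymptotic velocity for T³ Gowdy solutions: for every `θ`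
the limit `V(θ) = lim_{τ→∞} [(∂τP)² + e^{2P}(∂τQ)²]^{1/2}` exists and is a
well-defined nonnegative real number. -/
theorem gowdy_asymptotic_velocity_exists
    (P Q : ℝ → ℝ → ℝ)
    (hPsmooth : ContDiff ℝ (⊤ : ℕ∞) (fun p : ℝ × ℝ => P p.1 p.2))
    (hQsmooth : ContDiff ℝ (⊤ : ℕ∞) (fun p : ℝ × ℝ => Q p.1 p.2))
    (hPper : ∀ τ θ : ℝ, P τ (θ + 2 * π) = P τ θ)
    (hQper : ∀ τ θ : ℝ, Q τ (θ + 2 * π) = Q τ θ)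
    (hPwave : ∀ τ θ : ℝ, deriv (fun s => deriv (fun s' => P s' θ) s) τ
      = Real.exp (-2 * τ) * deriv (deriv (P τ)) θ
        + Real.exp (2 * P τ θ) * ((deriv (fun s => Q s θ) τ) ^ 2
          - Real.exp (-2 * τ) * (deriv (Q τ) θ) ^ 2))
    (hQwave : ∀ τ θ : ℝ, deriv (fun s => deriv (fun s' => Q s' θ) s) τ
      = Real.exp (-2 * τ) * deriv (deriv (Q τ)) θ
        - 2 * (deriv (fun s => P s θ) τ * deriv (fun s => Q s θ) τ
          - Real.exp (-2 * τ) * deriv (P τ) θ * deriv (Q τ) θ)) :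
    ∀ θ : ℝ, ∃ V : ℝ, 0 ≤ V ∧
      Tendsto (fun τ => Real.sqrt ((deriv (fun s => P s θ) τ) ^ 2
        + Real.exp (2 * P τ θ) * (deriv (fun s => Q s θ) τ) ^ 2)) atTop (nhds V) := by
  exact gowdy_asymptotic_velocity_exists_general P Q (contDiff_infty.1 hPsmooth 3)
    (contDiff_infty.1 hQsmooth 3) hPwave hQwave
end
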